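/- arXiv:math/0410506 — 7 statements merged into one kernel-verified Lean document; each statement's English description precedes it below -/
import Mathlib

section
/- Let (Tₙ) be a sequence in Aut(X,𝓑) and S ∈ Aut(X,𝓑). If Tₙ converges to S in the topology p, then Tₙ converges to S in the topology τ. Moreover, the following are equivalent: (a) Tₙ converges to S in τ; (b) Tₙ converges to S in τ''; (c) Tₙ converges to S in p̄. -/
/-!
All the convergence notions reduce to one elementary condition on the sequence: for every point
`x`, eventually `T n x = S x`.

Each topology forces this condition when it is tested on small data: `τ` and `τ''` on Dirac
measures (with the indicator of `{S x}` as test function for `τ''`), `p` on singletons, and `p̄` on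
a singleton together with a Dirac measure.

Conversely, the condition also gives `(T n)⁻¹ x = S⁻¹ x` eventually (`eventually_symm_eq`), so
each point lies in only finitely many of the sets `E(T n, S)`, and
`μ (E(T n, S)) → 0` by dominated convergence, for every probability measure `μ`
(`tendsto_measure_Edis`). The quantities comparing `T n` with `S` in the definitions of `τ`, `τ''` and `p̄`
are at most `2 μ (E(T n, S))`. Since neighborhoods centred at some `R ≠ S` may contain `S`, the
triangle inequality is used to pass from `S` to `R`.
-/

open MeasureTheory Set Filter Topology
open scoped ENNReal

namespace BDK

variable {X : Type*} [MeasurableSpace X]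

/-- The set `E(S,T)` where `S` and `T` (or their inverses) disagree. -/
def Edis (S T : X ≃ᵐ X) : Set X :=
  {x | S x ≠ T x} ∪ {x | S.symm x ≠ T.symm x}

/-- A finite family of Borel probability measures. -/
def IsProbFamily (M : Set (Measure X)) : Prop :=
  M.Finite ∧ ∀ μ ∈ M, IsProbabilityMeasure μ

/-- A finite family of non-atomic (continuous) Borel probability measures. -/
def IsContProbFamily (M : Set (Measure X)) : Prop :=
  M.Finite ∧ ∀ μ ∈ M, IsProbabilityMeasure μ ∧ ∀ x : X, μ {x} = 0

/-- A finite family of Borel sets. -/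
def IsBorelFamily (F : Set (Set X)) : Prop :=
  F.Finite ∧ ∀ A ∈ F, MeasurableSet A

/-- A finite family of uncountable Borel sets. -/
def IsUncountableBorelFamily (F : Set (Set X)) : Prop :=
  F.Finite ∧ ∀ A ∈ F, MeasurableSet A ∧ ¬ A.Countable

/-- Basic `τ`-neighborhood `U(T; μ₁,…,μₙ; ε)`. -/
def tauBall (T : X ≃ᵐ X) (M : Set (Measure X)) (ε : ℝ≥0∞) : Set (X ≃ᵐ X) :=
  {S | ∀ μ ∈ M, μ (Edis S T) < ε}

/-- The uniform topology `τ`. -/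
def tau : TopologicalSpace (X ≃ᵐ X) :=
  .generateFrom {O | ∃ (T : X ≃ᵐ X) (M : Set (Measure X)) (ε : ℝ≥0∞),
    IsProbFamily M ∧ 0 < ε ∧ O = tauBall T M ε}

/-- The topology `τ₀`: like `τ` but with non-atomic measures only. -/
def tau0 : TopologicalSpace (X ≃ᵐ X) :=
  .generateFrom {O | ∃ (T : X ≃ᵐ X) (M : Set (Measure X)) (ε : ℝ≥0∞),
    IsContProbFamily M ∧ 0 < ε ∧ O = tauBall T M ε}

/-- Basic `τ'`-neighborhood `U'(T; μ₁,…,μₙ; ε)`. -/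
def tau'Ball (T : X ≃ᵐ X) (M : Set (Measure X)) (ε : ℝ≥0∞) : Set (X ≃ᵐ X) :=
  {S | ∀ μ ∈ M,
    (⨆ F ∈ {F : Set X | MeasurableSet F}, μ (symmDiff (T '' F) (S '' F))) < ε}

/-- The topology `τ'`. -/
def tau' : TopologicalSpace (X ≃ᵐ X) :=
  .generateFrom {O | ∃ (T : X ≃ᵐ X) (M : Set (Measure X)) (ε : ℝ≥0∞),
    IsProbFamily M ∧ 0 < ε ∧ O = tau'Ball T M ε}

/-- The unit ball of bounded Borel functions. -/
def BorelUnitBall : Set (X → ℝ) := {f | Measurable f ∧ ∀ x, |f x| ≤ 1}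

/-- Basic `τ''`-neighborhood `U''(T; μ₁,…,μₙ; ε)`. -/
def tau''Ball (T : X ≃ᵐ X) (M : Set (Measure X)) (ε : ℝ) : Set (X ≃ᵐ X) :=
  {S | ∀ μ ∈ M,
    (⨆ f ∈ (BorelUnitBall : Set (X → ℝ)),
      |(∫ x, f x ∂(Measure.map (⇑S) μ)) - ∫ x, f x ∂(Measure.map (⇑T) μ)|) < ε}

/-- The topology `τ''`. -/
def tau'' : TopologicalSpace (X ≃ᵐ X) :=
  .generateFrom {O | ∃ (T : X ≃ᵐ X) (M : Set (Measure X)) (ε : ℝ),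
    IsProbFamily M ∧ 0 < ε ∧ O = tau''Ball T M ε}

/-- A finite Borel partition of `X`. -/
def IsBorelPartition (P : Finset (Set X)) : Prop :=
  (∀ A ∈ P, MeasurableSet A) ∧ (P : Set (Set X)).PairwiseDisjoint id ∧
    ⋃₀ (P : Set (Set X)) = univ

/-- Basic `τ̃`-neighborhood `Ṽ(T; μ₁,…,μₙ; ε)`. -/
def tauTildeBall (T : X ≃ᵐ X) (M : Set (Measure X)) (ε : ℝ) : Set (X ≃ᵐ X) :=
  {S | ∀ μ ∈ M,
    (⨆ P ∈ {P : Finset (Set X) | IsBorelPartition P},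
      ∑ A ∈ P, |(μ (T '' A)).toReal - (μ (S '' A)).toReal|) < ε}

/-- The topology `τ̃`. -/
def tauTilde : TopologicalSpace (X ≃ᵐ X) :=
  .generateFrom {O | ∃ (T : X ≃ᵐ X) (M : Set (Measure X)) (ε : ℝ),
    IsProbFamily M ∧ 0 < ε ∧ O = tauTildeBall T M ε}

/-- Basic `τ̄`-neighborhood `V̄(T; μ₁,…,μₙ; ε)`. -/
def tauBarBall (T : X ≃ᵐ X) (M : Set (Measure X)) (ε : ℝ) : Set (X ≃ᵐ X) :=
  {S | ∀ μ ∈ M,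
    (⨆ F ∈ {F : Set X | MeasurableSet F},
      |(μ (T '' F)).toReal - (μ (S '' F)).toReal|) < ε}

/-- The topology `τ̄`. -/
def tauBar : TopologicalSpace (X ≃ᵐ X) :=
  .generateFrom {O | ∃ (T : X ≃ᵐ X) (M : Set (Measure X)) (ε : ℝ),
    IsProbFamily M ∧ 0 < ε ∧ O = tauBarBall T M ε}

/-- Basic `p`-neighborhood `W(T; F₁,…,Fₖ)`. -/
def pBall (T : X ≃ᵐ X) (F : Set (Set X)) : Set (X ≃ᵐ X) :=
  {S | ∀ A ∈ F, S '' A = T '' A}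

/-- The weak topology `p`. -/
def pTop : TopologicalSpace (X ≃ᵐ X) :=
  .generateFrom {O | ∃ (T : X ≃ᵐ X) (F : Set (Set X)), IsBorelFamily F ∧ O = pBall T F}

/-- The topology `p₀`: like `p` but with uncountable Borel sets only. -/
def p0Top : TopologicalSpace (X ≃ᵐ X) :=
  .generateFrom {O | ∃ (T : X ≃ᵐ X) (F : Set (Set X)),
    IsUncountableBorelFamily F ∧ O = pBall T F}

/-- A finite family of bounded Borel functions. -/
def IsBddBorelFamily (G : Set (X → ℝ)) : Prop :=
  G.Finite ∧ ∀ f ∈ G, Measurable f ∧ ∃ C, ∀ x, |f x| ≤ C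

/-- Basic `p̃`-neighborhood `W̃(T; f₁,…,fₘ; ε)`. -/
def pTildeBall (T : X ≃ᵐ X) (G : Set (X → ℝ)) (ε : ℝ) : Set (X ≃ᵐ X) :=
  {S | ∀ f ∈ G, (⨆ x, |f (T.symm x) - f (S.symm x)|) < ε}

/-- The topology `p̃`. -/
def pTilde : TopologicalSpace (X ≃ᵐ X) :=
  .generateFrom {O | ∃ (T : X ≃ᵐ X) (G : Set (X → ℝ)) (ε : ℝ),
    IsBddBorelFamily G ∧ 0 < ε ∧ O = pTildeBall T G ε}

/-- Basic `p̄`-neighborhood `W̄(T; F₁,…,Fₖ; μ₁,…,μₙ; ε)`. -/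
def pBarBall (T : X ≃ᵐ X) (F : Set (Set X)) (M : Set (Measure X)) (ε : ℝ≥0∞) :
    Set (X ≃ᵐ X) :=
  {S | ∀ A ∈ F, ∀ μ ∈ M,
    μ (symmDiff (S '' A) (T '' A)) + μ (symmDiff (S.symm '' A) (T.symm '' A)) < ε}

/-- The topology `p̄`. -/
def pBar : TopologicalSpace (X ≃ᵐ X) :=
  .generateFrom {O | ∃ (T : X ≃ᵐ X) (F : Set (Set X)) (M : Set (Measure X)) (ε : ℝ≥0∞),
    IsBorelFamily F ∧ IsProbFamily M ∧ 0 < ε ∧ O = pBarBall T F M ε}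

/-- `T` has period exactly `n` at `x`. -/
def PerExactAt (T : X ≃ᵐ X) (n : ℕ) (x : X) : Prop :=
  (⇑T)^[n] x = x ∧ ∀ i, 0 < i → i < n → (⇑T)^[i] x ≠ x

/-- `Per_n(x)`: automorphisms with period exactly `n` at `x`. -/
def PerNAt (n : ℕ) (x : X) : Set (X ≃ᵐ X) := {T | PerExactAt T n x}

/-- `Per_n`: automorphisms of period exactly `n` at every point. -/
def PerN (n : ℕ) : Set (X ≃ᵐ X) := {T | ∀ x, PerExactAt T n x}

/-- `Per`: pointwise periodic automorphisms. -/
def PerSet : Set (X ≃ᵐ X) := {T | ∀ x, ∃ m, 0 < m ∧ (⇑T)^[m] x = x}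

/-- `Per₀`: automorphisms with `T^N = id` for some `N ≥ 1`. -/
def Per0Set : Set (X ≃ᵐ X) := {T | ∃ N, 0 < N ∧ ∀ x, (⇑T)^[N] x = x}

/-- `Ap`: aperiodic automorphisms. -/
def ApSet : Set (X ≃ᵐ X) := {T | ∀ x, ∀ n, 0 < n → (⇑T)^[n] x ≠ x}

/-- Automorphisms whose set of periodic points is at most countable. -/
def ApModCtbl : Set (X ≃ᵐ X) :=
  {T | {x | ∃ n, 0 < n ∧ (⇑T)^[n] x = x}.Countable}

/-- `Ctbl(X)`: automorphisms with at most countable support. -/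
def Ctbl : Set (X ≃ᵐ X) := {T | {x | T x ≠ x}.Countable}

/-- The full group `[T]`. -/
def fullGroup (T : X ≃ᵐ X) : Set (X ≃ᵐ X) :=
  {γ | ∀ x, ∃ m : ℤ, γ x = (T.toEquiv ^ m) x}

/-- Incompressible aperiodic automorphisms: aperiodic with an invariant Borel
probability measure. -/
def IncSet : Set (X ≃ᵐ X) :=
  {T | T ∈ ApSet ∧ ∃ μ : Measure X, IsProbabilityMeasure μ ∧
    ∀ A : Set X, MeasurableSet A → μ (⇑T ⁻¹' A) = μ A}

/-- Pointwise eventual equality passes to the inverses: if `T n` agrees with `S` at `S⁻¹ x`,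
then `T n` sends `S⁻¹ x` to `x`. -/
lemma eventually_symm_eq {T : ℕ → X ≃ᵐ X} {S : X ≃ᵐ X}
    (h : ∀ x, ∀ᶠ n in atTop, T n x = S x) (x : X) :
    ∀ᶠ n in atTop, (T n).symm x = S.symm x := by
  filter_upwards [h (S.symm x)] with n hn
  rw [MeasurableEquiv.apply_symm_apply] at hn
  rw [← hn, MeasurableEquiv.symm_apply_apply, hn]

/-- Dominated convergence: if every point is eventually outside `E(T n, S)`, the measures of
these sets tend to zero. -/
lemma tendsto_measure_Edis [StandardBorelSpace X] {T : ℕ → X ≃ᵐ X} {S : X ≃ᵐ X}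
    (h : ∀ x, ∀ᶠ n in atTop, T n x = S x) (μ : Measure X) [IsProbabilityMeasure μ] :
    Tendsto (fun n => μ (Edis (T n) S)) atTop (𝓝 0) := by
  have hm : ∀ n, MeasurableSet (Edis (T n) S) := fun n =>
    (measurableSet_eq_fun (T n).measurable S.measurable).compl.union
      (measurableSet_eq_fun (T n).symm.measurable S.symm.measurable).compl
  have := tendsto_measure_of_tendsto_indicator_of_isFiniteMeasure (A := (∅ : Set X)) atTop μ hm
    (fun x => by
      filter_upwards [h x, eventually_symm_eq h x] with n h1 h2
      simp [Edis, h1, h2])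
  simpa using this

lemma Edis_subset (R S T : X ≃ᵐ X) : Edis T R ⊆ Edis T S ∪ Edis S R := by
  intro x hx
  simp only [Edis, mem_union, mem_ofPred_eq] at *
  grind

lemma symmDiff_image_subset_Edis (S T : X ≃ᵐ X) (A : Set X) :
    symmDiff (T '' A) (S '' A) ⊆ Edis T S := by
  intro x hx
  by_contra hc
  simp only [Edis, mem_union, mem_ofPred_eq, not_or, not_not] at hc
  rw [MeasurableEquiv.image_eq_preimage_symm, MeasurableEquiv.image_eq_preimage_symm] at hx
  simp [mem_symmDiff, hc.2] at hx

lemma symmDiff_image_symm_subset_Edis (S T : X ≃ᵐ X) (A : Set X) :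
    symmDiff (T.symm '' A) (S.symm '' A) ⊆ Edis T S := by
  have h := symmDiff_image_subset_Edis S.symm T.symm A
  exact h.trans (by simp [Edis, union_comm])

/-- The Dirac mass at `S x` detects the failure of `T x = S x` on the singleton `{x}`. -/
lemma eq_of_dirac_symmDiff_image_singleton_lt [MeasurableSingletonClass X] (S T : X ≃ᵐ X) {x : X}
    (h : Measure.dirac (S x) (symmDiff (T '' {x}) (S '' {x})) < 1) : T x = S x := by
  by_contra hc
  have hx : S x ∈ symmDiff (T '' {x}) (S '' {x}) := by
    simp only [image_singleton, mem_symmDiff, mem_singleton_iff]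
    exact Or.inr ⟨trivial, fun h => hc h.symm⟩
  rw [Measure.dirac_apply_of_mem hx] at h
  exact lt_irrefl _ h

lemma eventually_const_mul_add_lt {e : ℕ → ℝ≥0∞} (he : Tendsto e atTop (𝓝 0)) {c d ε : ℝ≥0∞}
    (hc : c ≠ ∞) (hd : d < ε) : ∀ᶠ n in atTop, c * e n + d < ε := by
  have h1 : Tendsto (fun n => c * e n + d) atTop (𝓝 (c * 0 + d)) :=
    (ENNReal.Tendsto.const_mul he (Or.inr hc)).add_const d
  exact h1.eventually_lt_const (by simpa using hd)

lemma isProbFamily_dirac (x : X) : IsProbFamily {Measure.dirac x} :=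
  ⟨finite_singleton _, by rintro _ rfl; infer_instance⟩

lemma tendsto_tau_iff [StandardBorelSpace X] (T : ℕ → X ≃ᵐ X) (S : X ≃ᵐ X) :
    Tendsto T atTop (@nhds _ tau S) ↔ ∀ x, ∀ᶠ n in atTop, T n x = S x := by
  rw [tau, TopologicalSpace.tendsto_nhds_generateFrom_iff]
  constructor
  · intro h x
    have hS : S ∈ tauBall S {Measure.dirac x} 1 := by simp [tauBall, Edis]
    filter_upwards [h _ ⟨S, _, 1, isProbFamily_dirac x, one_pos, rfl⟩ hS] with n hn
    by_contra hc
    have hx : x ∈ Edis (T n) S := Or.inl hc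
    have := hn _ rfl
    rw [Measure.dirac_apply_of_mem hx] at this
    exact lt_irrefl _ this
  · rintro h _ ⟨R, M, ε, hM, -, rfl⟩ hS
    refine (eventually_all_finite hM.1).2 fun μ hμ => ?_
    have := hM.2 μ hμ
    filter_upwards [eventually_const_mul_add_lt (tendsto_measure_Edis h μ) ENNReal.one_ne_top
      (hS μ hμ)] with n hn
    rw [one_mul] at hn
    exact ((measure_mono (Edis_subset R S (T n))).trans (measure_union_le _ _)).trans_lt hn

lemma tendsto_pBar_iff [StandardBorelSpace X] (T : ℕ → X ≃ᵐ X) (S : X ≃ᵐ X) :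
    Tendsto T atTop (@nhds _ pBar S) ↔ ∀ x, ∀ᶠ n in atTop, T n x = S x := by
  rw [pBar, TopologicalSpace.tendsto_nhds_generateFrom_iff]
  constructor
  · intro h x
    have hS : S ∈ pBarBall S {{x}} {Measure.dirac (S x)} 1 := by simp [pBarBall]
    have hF : IsBorelFamily ({{x}} : Set (Set X)) :=
      ⟨finite_singleton _, by rintro _ rfl; exact measurableSet_singleton x⟩
    filter_upwards [h _ ⟨S, _, _, 1, hF, isProbFamily_dirac _, one_pos, rfl⟩ hS] with n hn
    exact eq_of_dirac_symmDiff_image_singleton_lt S (T n)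
      (lt_of_le_of_lt le_self_add (hn _ rfl _ rfl))
  · rintro h _ ⟨R, F, M, ε, hF, hM, -, rfl⟩ hS
    refine (eventually_all_finite hF.1).2 fun A hA => (eventually_all_finite hM.1).2 fun μ hμ => ?_
    have := hM.2 μ hμ
    filter_upwards [eventually_const_mul_add_lt (tendsto_measure_Edis h μ)
      (ENNReal.ofNat_ne_top : (2 : ℝ≥0∞) ≠ ∞) (hS A hA μ hμ)] with n hn
    refine lt_of_le_of_lt ?_ hn
    have tri : ∀ B C D : Set X, μ (symmDiff B D) ≤ μ (symmDiff B C) + μ (symmDiff C D) :=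
      fun B C D => (measure_mono (symmDiff_triangle B C D)).trans (measure_union_le _ _)
    calc _ ≤ (μ (Edis (T n) S) + μ (symmDiff (S '' A) (R '' A))) +
          (μ (Edis (T n) S) + μ (symmDiff (S.symm '' A) (R.symm '' A))) := by
          refine add_le_add ((tri _ (S '' A) _).trans ?_) ((tri _ (S.symm '' A) _).trans ?_)
          · gcongr; exact symmDiff_image_subset_Edis S (T n) A
          · gcongr; exact symmDiff_image_symm_subset_Edis S (T n) A
      _ = 2 * μ (Edis (T n) S) + _ := by ring

lemma abs_integral_map_le_one {f : X → ℝ} (hf : f ∈ (BorelUnitBall : Set (X → ℝ)))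
    (T : X ≃ᵐ X) (μ : Measure X) [IsProbabilityMeasure μ] :
    |∫ x, f x ∂(Measure.map T μ)| ≤ 1 := by
  have := Measure.isProbabilityMeasure_map (μ := μ) T.measurable.aemeasurable
  simpa using norm_integral_le_of_norm_le_const (μ := Measure.map T μ) (f := f) (C := 1)
    (ae_of_all _ hf.2)

lemma bddAbove_tau'' (S T : X ≃ᵐ X) (μ : Measure X) [IsProbabilityMeasure μ] :
    BddAbove (range fun f : X → ℝ => ⨆ _ : f ∈ (BorelUnitBall : Set (X → ℝ)),
      |(∫ x, f x ∂(Measure.map S μ)) - ∫ x, f x ∂(Measure.map T μ)|) := by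
  refine ⟨2, ?_⟩
  rintro _ ⟨f, rfl⟩
  refine Real.iSup_le (fun hf => ?_) zero_le_two
  have h1 := abs_integral_map_le_one hf S μ
  have h2 := abs_integral_map_le_one hf T μ
  exact (abs_sub _ _).trans (by linarith)

/-- The real-valued `⨆` in `tau''Ball` is over a bounded family, so it is a genuine upper bound
and not the junk value `0`. -/
lemma le_tau''_iSup (S T : X ≃ᵐ X) (μ : Measure X) [IsProbabilityMeasure μ] {f : X → ℝ}
    (hf : f ∈ (BorelUnitBall : Set (X → ℝ))) :
    |(∫ x, f x ∂(Measure.map S μ)) - ∫ x, f x ∂(Measure.map T μ)| ≤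
      ⨆ f ∈ (BorelUnitBall : Set (X → ℝ)),
        |(∫ x, f x ∂(Measure.map S μ)) - ∫ x, f x ∂(Measure.map T μ)| := by
  refine le_trans ?_ (le_ciSup (bddAbove_tau'' S T μ) f)
  simp [hf]

lemma abs_integral_map_sub_le (S T : X ≃ᵐ X) (μ : Measure X)
    [IsProbabilityMeasure μ] {f : X → ℝ} (hf : f ∈ (BorelUnitBall : Set (X → ℝ))) :
    |(∫ x, f x ∂(Measure.map T μ)) - ∫ x, f x ∂(Measure.map S μ)| ≤
      2 * μ.real (Edis T S) := by
  have hi : ∀ R : X ≃ᵐ X, Integrable (fun x => f (R x)) μ := fun R =>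
    Integrable.of_bound (hf.1.comp R.measurable).aestronglyMeasurable 1
      (ae_of_all _ fun x => hf.2 (R x))
  rw [integral_map_equiv, integral_map_equiv, ← integral_sub (hi T) (hi S),
    ← setIntegral_eq_integral_of_forall_compl_eq_zero (s := Edis T S)]
  · rw [← Real.norm_eq_abs]
    refine norm_setIntegral_le_of_norm_le_const (measure_lt_top μ _) fun x _ => ?_
    exact (abs_sub _ _).trans (by linarith [hf.2 (T x), hf.2 (S x)])
  · intro x hx
    simp only [Edis, mem_union, mem_ofPred_eq, not_or, not_not] at hx
    simp [hx.1]

lemma tendsto_tau''_iff [StandardBorelSpace X] (T : ℕ → X ≃ᵐ X) (S : X ≃ᵐ X) :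
    Tendsto T atTop (@nhds _ tau'' S) ↔ ∀ x, ∀ᶠ n in atTop, T n x = S x := by
  rw [tau'', TopologicalSpace.tendsto_nhds_generateFrom_iff]
  constructor
  · intro h x
    have hS : S ∈ tau''Ball S {Measure.dirac x} 1 := by simp [tau''Ball]
    filter_upwards [h _ ⟨S, _, 1, isProbFamily_dirac x, one_pos, rfl⟩ hS] with n hn
    by_contra hc
    -- The indicator of `{S x}` separates the two Dirac masses.
    have hf : indicator {S x} (fun _ => (1 : ℝ)) ∈ (BorelUnitBall : Set (X → ℝ)) := by
      refine ⟨measurable_const.indicator (measurableSet_singleton _), fun y => ?_⟩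
      by_cases hy : y ∈ ({S x} : Set X) <;> simp [indicator, hy]
    have := (le_tau''_iSup (T n) S (Measure.dirac x) hf).trans_lt (hn _ rfl)
    rw [integral_map_equiv, integral_map_equiv, integral_dirac, integral_dirac] at this
    simp [hc] at this
  · rintro h _ ⟨R, M, ε, hM, -, rfl⟩ hS
    refine (eventually_all_finite hM.1).2 fun μ hμ => ?_
    have := hM.2 μ hμ
    have hE : Tendsto (fun n => μ.real (Edis (T n) S)) atTop (𝓝 0) := by
      exact (ENNReal.tendsto_toReal ENNReal.zero_ne_top).comp (tendsto_measure_Edis h μ)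
    have hlim := (hE.const_mul 2).add_const (⨆ f ∈ (BorelUnitBall : Set (X → ℝ)),
      |(∫ x, f x ∂(Measure.map (⇑S) μ)) - ∫ x, f x ∂(Measure.map (⇑R) μ)|)
    filter_upwards [hlim.eventually_lt_const (by simpa using hS μ hμ)] with n hn
    have h0 : 0 ≤ ⨆ f ∈ (BorelUnitBall : Set (X → ℝ)),
        |(∫ x, f x ∂(Measure.map (⇑S) μ)) - ∫ x, f x ∂(Measure.map (⇑R) μ)| :=
      Real.iSup_nonneg fun _ => Real.iSup_nonneg fun _ => abs_nonneg _
    have h1 : 0 ≤ 2 * μ.real (Edis (T n) S) := by positivity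
    refine lt_of_le_of_lt ?_ hn
    refine Real.iSup_le (fun f => Real.iSup_le (fun hf => ?_) (add_nonneg h1 h0))
      (add_nonneg h1 h0)
    exact (abs_sub_le _ _ _).trans
      (add_le_add (abs_integral_map_sub_le S (T n) μ hf) (le_tau''_iSup S R μ hf))

/-- Convergence in `p`, tested on singletons, forces eventual equality at each point. -/
lemma eventually_eq_of_tendsto_pTop [StandardBorelSpace X] {T : ℕ → X ≃ᵐ X} {S : X ≃ᵐ X}
    (h : Tendsto T atTop (@nhds _ pTop S)) (x : X) : ∀ᶠ n in atTop, T n x = S x := by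
  rw [pTop, TopologicalSpace.tendsto_nhds_generateFrom_iff] at h
  have hF : IsBorelFamily ({{x}} : Set (Set X)) :=
    ⟨finite_singleton _, by rintro _ rfl; exact measurableSet_singleton x⟩
  filter_upwards [h _ ⟨S, _, hF, rfl⟩ fun _ _ => rfl] with n hn
  simpa using hn _ rfl

/-- For sequences in `Aut(X,𝓑)`: `p`-convergence implies `τ`-convergence, and
`τ`-convergence, `τ''`-convergence and `p̄`-convergence are all equivalent. -/
theorem convergence_comparison {X : Type*} [MeasurableSpace X] [StandardBorelSpace X]
    [Uncountable X] (T : ℕ → X ≃ᵐ X) (S : X ≃ᵐ X) :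
    (Tendsto T atTop (@nhds _ pTop S) → Tendsto T atTop (@nhds _ tau S)) ∧
    (Tendsto T atTop (@nhds _ tau S) ↔ Tendsto T atTop (@nhds _ tau'' S)) ∧
    (Tendsto T atTop (@nhds _ tau S) ↔ Tendsto T atTop (@nhds _ pBar S)) := by
  rw [tendsto_tau_iff, tendsto_tau''_iff, tendsto_pBar_iff]
  exact ⟨eventually_eq_of_tendsto_pTop, Iff.rfl, Iff.rfl⟩

end BDK
end

section
/- A sequence (Tₙ) in Aut(X,𝓑) converges to S ∈ Aut(X,𝓑) in the topology p̄ if and only if for every Borel set F ⊆ X one has S F = limsup_{n→∞} Tₙ F and S⁻¹ F = limsup_{n→∞} Tₙ⁻¹ F, where limsup_{n→∞} Fₙ = ⋃_m ⋂_{n>m} Fₙ. -/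
/-!
Both sides say that, for every Borel `F` and every point `x`, eventually `x ∈ Tₙ F ↔ x ∈ S F`, and
likewise for the inverses.

The set `⋃ m, ⋂ n > m, Tₙ F` consists of the points lying in `Tₙ F` for all large `n`. Since
`Tₙ Fᶜ = (Tₙ F)ᶜ`, applying the set equality to both `F` and `Fᶜ` gives exactly this eventual
pointwise agreement (`forall_image_eq_iff`). Convergence in `pBar` implies the agreement at `x` by
testing against the Dirac measure at `x`. Conversely, pointwise agreement makes the indicators of
`Tₙ F ∆ S F` tend to zero, so `μ (Tₙ F ∆ S F) → 0` for every probability measure by dominated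
convergence (`tendsto_measure_symmDiff`), and the triangle inequality for `μ (A ∆ B)` shows that
`Tₙ` eventually lies in every basic `pBar`-neighbourhood containing `S`.
-/


open MeasureTheory Set Filter Topology
open scoped ENNReal

namespace BDK

variable {X : Type*} [MeasurableSpace X]

lemma mem_iUnion_iInter_gt_iff {Y : Type*} (A : ℕ → Set Y) (x : Y) :
    (x ∈ ⋃ m, ⋂ n, ⋂ (_ : m < n), A n) ↔ ∀ᶠ n in atTop, x ∈ A n := by
  simp only [mem_iUnion, mem_iInter]
  constructor
  · rintro ⟨m, hm⟩
    filter_upwards [eventually_gt_atTop m] with n hn using hm n hn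
  · intro h
    obtain ⟨m, hm⟩ := eventually_atTop.1 h
    exact ⟨m, fun n hn => hm n hn.le⟩

/-- The set equalities for all measurable `F` amount to eventual pointwise agreement of the images;
the direction from left to right uses the equality for both `F` and `Fᶜ`. -/
lemma forall_image_eq_iff {Y : Type*} [MeasurableSpace Y] (T : ℕ → Y ≃ᵐ Y) (S : Y ≃ᵐ Y) :
    (∀ F : Set Y, MeasurableSet F → S '' F = ⋃ m, ⋂ n, ⋂ (_ : m < n), (T n) '' F) ↔
      ∀ F : Set Y, MeasurableSet F → ∀ x, ∀ᶠ n in atTop, (x ∈ T n '' F ↔ x ∈ S '' F) := by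
  constructor
  · intro h F hF x
    by_cases hx : x ∈ S '' F
    · have hx' := hx
      rw [h F hF, mem_iUnion_iInter_gt_iff] at hx'
      filter_upwards [hx'] with n hn using iff_of_true hn hx
    · have hx' : x ∈ S '' Fᶜ := by
        rw [image_compl_eq S.bijective]
        exact hx
      rw [h _ hF.compl, mem_iUnion_iInter_gt_iff] at hx'
      filter_upwards [hx'] with n hn
      rw [image_compl_eq (T n).bijective] at hn
      exact iff_of_false hn hx
  · intro h F hF
    ext x
    rw [mem_iUnion_iInter_gt_iff, eventually_congr (h F hF x), eventually_const]

lemma tendsto_measure_symmDiff {Y : Type*} [MeasurableSpace Y] (μ : Measure Y)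
    [IsFiniteMeasure μ] {A : ℕ → Set Y} {B : Set Y} (hA : ∀ n, MeasurableSet (A n))
    (hB : MeasurableSet B) (h : ∀ x, ∀ᶠ n in atTop, (x ∈ A n ↔ x ∈ B)) :
    Tendsto (fun n => μ (symmDiff (A n) B)) atTop (𝓝 0) := by
  rw [← measure_empty (μ := μ)]
  refine tendsto_measure_of_tendsto_indicator_of_isFiniteMeasure atTop μ
    (fun n => (hA n).symmDiff hB) ?_
  intro x
  filter_upwards [h x] with n hn
  simp [mem_symmDiff, hn]

/-- A Dirac measure takes only the values `0` and `1`, so the `pBar`-ball of radius `1` around `S`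
given by `F` and the Dirac measure at `x` consists of those `R` for which `R F` and `R⁻¹ F` contain
`x` exactly when `S F` and `S⁻¹ F` do, respectively. -/
lemma eventually_agree_of_tendsto {Y : Type*} [MeasurableSpace Y] {T : ℕ → Y ≃ᵐ Y} {S : Y ≃ᵐ Y}
    (h : Tendsto T atTop (@nhds _ pBar S)) {F : Set Y} (hF : MeasurableSet F) (x : Y) :
    ∀ᶠ n in atTop, (x ∈ T n '' F ↔ x ∈ S '' F) ∧ (x ∈ (T n).symm '' F ↔ x ∈ S.symm '' F) := by
  have hev : ∀ᶠ n in atTop, T n ∈ pBarBall S {F} {Measure.dirac x} 1 := by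
    refine (TopologicalSpace.tendsto_nhds_generateFrom_iff.1 h) _ ⟨S, {F}, {Measure.dirac x}, 1,
      ⟨finite_singleton _, by simpa using hF⟩, ⟨finite_singleton _, ?_⟩, one_pos, rfl⟩ ?_
    · rintro μ rfl
      infer_instance
    · simp [pBarBall]
  filter_upwards [hev] with n hn
  have hlt := hn F rfl _ rfl
  have key : ∀ R R' : Y ≃ᵐ Y, Measure.dirac x (symmDiff (R '' F) (R' '' F)) < 1 →
      (x ∈ R '' F ↔ x ∈ R' '' F) := by
    intro R R' hR
    rw [Measure.dirac_apply' x ((R.measurableSet_image.2 hF).symmDiff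
      (R'.measurableSet_image.2 hF))] at hR
    by_contra hne
    have hmem : x ∈ symmDiff (R '' F) (R' '' F) := by
      rw [mem_symmDiff]
      tauto
    simp [hmem] at hR
  exact ⟨key _ _ (le_self_add.trans_lt hlt), key _ _ (le_add_self.trans_lt hlt)⟩

/-- The balls generating `pBar` may be centred anywhere; the triangle inequality for
`μ (A ∆ B)` reduces membership in a ball containing `S` to smallness of `μ (Tₙ A ∆ S A)`. -/
lemma tendsto_pBar_of_eventually_agree {Y : Type*} [MeasurableSpace Y] {T : ℕ → Y ≃ᵐ Y}
    {S : Y ≃ᵐ Y}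
    (h₁ : ∀ F : Set Y, MeasurableSet F → ∀ x, ∀ᶠ n in atTop, (x ∈ T n '' F ↔ x ∈ S '' F))
    (h₂ : ∀ F : Set Y, MeasurableSet F → ∀ x, ∀ᶠ n in atTop,
      (x ∈ (T n).symm '' F ↔ x ∈ S.symm '' F)) :
    Tendsto T atTop (@nhds _ pBar S) := by
  refine TopologicalSpace.tendsto_nhds_generateFrom_iff.2 ?_
  rintro _ ⟨R, F, M, ε, ⟨hFfin, hF⟩, ⟨hMfin, hM⟩, -, rfl⟩ hS
  change ∀ᶠ n in atTop, ∀ A ∈ F, ∀ μ ∈ M, _ < ε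
  rw [eventually_all_finite hFfin]
  intro A hA
  rw [eventually_all_finite hMfin]
  intro μ hμ
  have := hM μ hμ
  have hAm := hF A hA
  have t₁ := tendsto_measure_symmDiff μ (fun n => (T n).measurableSet_image.2 hAm)
    (S.measurableSet_image.2 hAm) (h₁ A hAm)
  have t₂ := tendsto_measure_symmDiff μ (fun n => (T n).symm.measurableSet_image.2 hAm)
    (S.symm.measurableSet_image.2 hAm) (h₂ A hAm)
  have t := (t₁.add t₂).add_const
    (μ (symmDiff (S '' A) (R '' A)) + μ (symmDiff (S.symm '' A) (R.symm '' A)))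
  rw [add_zero, zero_add] at t
  filter_upwards [t.eventually_lt_const (hS A hA μ hμ)] with n hn
  refine lt_of_le_of_lt ?_ hn
  rw [add_add_add_comm]
  exact add_le_add (measure_symmDiff_le _ _ _) (measure_symmDiff_le _ _ _)

/-- A sequence `(Tₙ)` converges to `S` in `p̄` iff for every Borel set `F`,
`S F = limsup Tₙ F` and `S⁻¹ F = limsup Tₙ⁻¹ F`, where
`limsup Fₙ = ⋃_m ⋂_{n>m} Fₙ`. -/
theorem pBar_convergence_iff_limsup {X : Type*} [MeasurableSpace X] [StandardBorelSpace X]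
    [Uncountable X] (T : ℕ → X ≃ᵐ X) (S : X ≃ᵐ X) :
    Tendsto T atTop (@nhds _ pBar S) ↔
      ∀ F : Set X, MeasurableSet F →
        (S '' F = ⋃ m, ⋂ n, ⋂ (_ : m < n), (T n) '' F) ∧
        (S.symm '' F = ⋃ m, ⋂ n, ⋂ (_ : m < n), (T n).symm '' F) := by
  have hsplit : (∀ F : Set X, MeasurableSet F →
        (S '' F = ⋃ m, ⋂ n, ⋂ (_ : m < n), (T n) '' F) ∧
        (S.symm '' F = ⋃ m, ⋂ n, ⋂ (_ : m < n), (T n).symm '' F)) ↔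
      (∀ F : Set X, MeasurableSet F → ∀ x, ∀ᶠ n in atTop, (x ∈ T n '' F ↔ x ∈ S '' F)) ∧
      (∀ F : Set X, MeasurableSet F → ∀ x, ∀ᶠ n in atTop,
        (x ∈ (T n).symm '' F ↔ x ∈ S.symm '' F)) := by
    rw [← forall_image_eq_iff T S, ← forall_image_eq_iff (fun n => (T n).symm) S.symm]
    simp only [← forall_and]
  rw [hsplit]
  exact ⟨fun h => ⟨fun F hF x => (eventually_agree_of_tendsto h hF x).mono fun _ hn => hn.1,
      fun F hF x => (eventually_agree_of_tendsto h hF x).mono fun _ hn => hn.2⟩,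
    fun h => tendsto_pBar_of_eventually_agree h.1 h.2⟩

end BDK
end

section
/- (1) For every x ∈ X and n ≥ 1, the set Per_n(x) of automorphisms having period exactly n at x is both closed and open in Aut(X,𝓑) with respect to each of the topologies τ, τ'', p and p̄. (2) The τ-closure of Per₀ equals the τ-closure of Per. (3) The set Ap of aperiodic automorphisms and, for each n ≥ 1, the set Per_n are closed with respect to each of the topologies τ, τ'', p and p̄. -/
/-!
Each of the topologies `τ`, `τ''`, `p`, `p̄` is fine enough that the sets `{S | S x = y}` are open:
the value at `x` is detected by the Dirac measure at `x` for `τ` and `τ''`, by the singleton `{x}`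
for `p`, and by `{x}` together with the Dirac measure at `y` for `p̄`. Only this property, `PointOpen`, matters for parts (1) and (3).
It makes `{S | Sⁿ x = y}` open, by induction on `n`, and hence clopen, since for fixed `x` these
sets partition the group as `y` varies. So `Per_n(x)` is a finite intersection of clopen sets,
while `Ap` and `Per_n` are intersections of closed sets.

For part (2), a pointwise periodic `T` is the `τ`-limit of the automorphisms that agree with `T`
on the invariant Borel set `{x | T^(n!) x = x}` and are the identity elsewhere
(`truncate T n!`). They have finite order, and these sets increase to `X`, so the
measure of their complements tends to `0` for every probability measure.
-/

open MeasureTheory Set Filter Topology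
open scoped ENNReal

namespace BDK

variable {X : Type*} [MeasurableSpace X]

/-! ### Topologies with open evaluation fibers -/

/-- The topology `t` makes every evaluation map `S ↦ S x` continuous into discrete `X`. -/
def PointOpen (t : TopologicalSpace (X ≃ᵐ X)) : Prop :=
  ∀ x y : X, @IsOpen _ t {S : X ≃ᵐ X | S x = y}

lemma PointOpen.isOpen_iterate {t : TopologicalSpace (X ≃ᵐ X)} (h : PointOpen t) (n : ℕ) :
    ∀ x y : X, @IsOpen _ t {S : X ≃ᵐ X | (⇑S)^[n] x = y} := by
  induction n with
  | zero => intro x y; exact isOpen_const (p := x = y)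
  | succ n ih =>
    intro x y
    have : {S : X ≃ᵐ X | (⇑S)^[n + 1] x = y} =
        ⋃ z, {S : X ≃ᵐ X | S x = z} ∩ {S : X ≃ᵐ X | (⇑S)^[n] z = y} := by
      ext S; simp
    rw [this]
    exact isOpen_iUnion fun z => (h x z).inter (ih z y)

lemma PointOpen.isClopen_iterate {t : TopologicalSpace (X ≃ᵐ X)} (h : PointOpen t) (n : ℕ)
    (x y : X) : IsClopen {S : X ≃ᵐ X | (⇑S)^[n] x = y} := by
  refine ⟨⟨?_⟩, h.isOpen_iterate n x y⟩
  have : {S : X ≃ᵐ X | (⇑S)^[n] x = y}ᶜ =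
      ⋃ z ∈ {z | z ≠ y}, {S : X ≃ᵐ X | (⇑S)^[n] x = z} := by
    ext S; simp
  rw [this]
  exact isOpen_biUnion fun z _ => h.isOpen_iterate n x z

lemma PointOpen.isClopen_perNAt {t : TopologicalSpace (X ≃ᵐ X)} (h : PointOpen t) (x : X)
    (n : ℕ) : IsClopen (PerNAt n x) := by
  have : PerNAt n x = {S : X ≃ᵐ X | (⇑S)^[n] x = x} ∩
      ⋂ i ∈ {i | 0 < i ∧ i < n}, {S : X ≃ᵐ X | (⇑S)^[i] x = x}ᶜ := by
    ext S; simp [PerNAt, PerExactAt]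
  rw [this]
  exact (h.isClopen_iterate n x x).inter
    (((Set.finite_lt_nat n).subset fun i hi => hi.2).isClopen_biInter
      fun i _ => (h.isClopen_iterate i x x).compl)

lemma PointOpen.isClosed_ap {t : TopologicalSpace (X ≃ᵐ X)} (h : PointOpen t) :
    IsClosed (ApSet : Set (X ≃ᵐ X)) := by
  have : (ApSet : Set (X ≃ᵐ X)) =
      ⋂ (x : X) (n : ℕ) (_ : 0 < n), {S : X ≃ᵐ X | (⇑S)^[n] x = x}ᶜ := by
    ext S; simp [ApSet]
  rw [this]
  exact isClosed_iInter fun x => isClosed_iInter fun n => isClosed_iInter fun _ =>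
    (h.isClopen_iterate n x x).compl.1

lemma PointOpen.isClosed_perN {t : TopologicalSpace (X ≃ᵐ X)} (h : PointOpen t) (n : ℕ) :
    IsClosed (PerN n : Set (X ≃ᵐ X)) := by
  have : (PerN n : Set (X ≃ᵐ X)) = ⋂ x : X, PerNAt n x := by
    ext S; simp [PerN, PerNAt]
  rw [this]
  exact isClosed_iInter fun x => (h.isClopen_perNAt x n).1

/-! ### Evaluation fibers are open in the four topologies -/

/-- To see that `{S | S x = y}` is open, it suffices to put a basic neighborhood of each of
its members inside it. -/
lemma pointOpen_generateFrom {g : Set (Set (X ≃ᵐ X))}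
    (h : ∀ (T : X ≃ᵐ X) (x : X), ∃ O ∈ g, T ∈ O ∧ ∀ S ∈ O, S x = T x) :
    PointOpen (.generateFrom g) := by
  intro x y
  let _ : TopologicalSpace (X ≃ᵐ X) := .generateFrom g
  rw [isOpen_iff_forall_mem_open]
  intro T hT
  obtain ⟨O, hO, hTO, hS⟩ := h T x
  exact ⟨O, fun S h => (hS S h).trans hT, TopologicalSpace.isOpen_generateFrom_of_mem hO, hTO⟩

lemma Edis_self (T : X ≃ᵐ X) : Edis T T = ∅ := by simp [Edis]

lemma pointOpen_tau : PointOpen (tau : TopologicalSpace (X ≃ᵐ X)) := by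
  refine pointOpen_generateFrom fun T x =>
    ⟨_, ⟨T, _, 1, isProbFamily_dirac x, one_pos, rfl⟩, ?_, ?_⟩
  · rintro μ rfl
    simp [Edis_self]
  · intro S hS
    by_contra hne
    have h1 := hS _ rfl
    rw [Measure.dirac_apply_of_mem (show x ∈ Edis S T from Or.inl hne)] at h1
    exact lt_irrefl _ h1

lemma pointOpen_tau'' [MeasurableSingletonClass X] :
    PointOpen (tau'' : TopologicalSpace (X ≃ᵐ X)) := by
  refine pointOpen_generateFrom fun T x =>
    ⟨_, ⟨T, _, 1, isProbFamily_dirac x, one_pos, rfl⟩, ?_, ?_⟩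
  · rintro μ rfl
    simp
  · intro S hS
    by_contra hne
    have h1 := hS _ rfl
    simp only [Measure.map_dirac' S.measurable, Measure.map_dirac' T.measurable,
      integral_dirac] at h1
    refine absurd h1 (not_lt.2 ?_)
    -- The supremum is bounded, hence not a junk value, and the indicator of `{T x}` attains `1`.
    have hbd : ∀ f : X → ℝ, (⨆ _ : f ∈ (BorelUnitBall : Set (X → ℝ)), |f (S x) - f (T x)|) ≤ 2 := by
      intro f
      refine Real.iSup_le (fun hf => ?_) (by norm_num)
      have a := abs_le.1 (hf.2 (S x))
      have b := abs_le.1 (hf.2 (T x))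
      exact abs_le.2 ⟨by linarith, by linarith⟩
    have hmem : indicator {T x} (fun _ => (1 : ℝ)) ∈ (BorelUnitBall : Set (X → ℝ)) := by
      refine ⟨measurable_const.indicator (measurableSet_singleton _), fun z => ?_⟩
      by_cases hz : z = T x <;> simp [hz]
    refine le_trans ?_ (le_ciSup ⟨2, by rintro _ ⟨f, rfl⟩; exact hbd f⟩
      (indicator {T x} (fun _ => (1 : ℝ))))
    rw [ciSup_pos hmem]
    simp [hne]

lemma pointOpen_pTop [MeasurableSingletonClass X] :
    PointOpen (pTop : TopologicalSpace (X ≃ᵐ X)) := by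
  refine pointOpen_generateFrom fun T x =>
    ⟨_, ⟨T, {{x}}, ⟨finite_singleton _, ?_⟩, rfl⟩, fun _ _ => rfl, fun S hS => ?_⟩
  · rintro _ rfl
    exact measurableSet_singleton _
  · simpa using hS _ rfl

lemma pointOpen_pBar [MeasurableSingletonClass X] :
    PointOpen (pBar : TopologicalSpace (X ≃ᵐ X)) := by
  refine pointOpen_generateFrom fun T x =>
    ⟨_, ⟨T, {{x}}, _, 1, ⟨finite_singleton _, ?_⟩, isProbFamily_dirac (T x), one_pos, rfl⟩,
      ?_, fun S hS => ?_⟩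
  · rintro _ rfl
    exact measurableSet_singleton _
  · intro A _ μ _
    simp
  · by_contra hne
    have h1 := hS _ rfl _ rfl
    rw [Measure.dirac_apply_of_mem (by simpa [Set.mem_symmDiff] using Ne.symm hne)] at h1
    exact absurd h1 (not_lt.2 le_self_add)

/-! ### Truncation of pointwise periodic automorphisms -/

lemma iterate_apply_eq_iff (T : X ≃ᵐ X) (N : ℕ) (x : X) :
    (⇑T)^[N] (T x) = T x ↔ (⇑T)^[N] x = x := by
  rw [← Function.iterate_succ_apply, Function.iterate_succ_apply', T.injective.eq_iff]

lemma iterate_symm_apply_eq_iff (T : X ≃ᵐ X) (N : ℕ) (x : X) :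
    (⇑T)^[N] (T.symm x) = T.symm x ↔ (⇑T)^[N] x = x := by
  rw [← iterate_apply_eq_iff T N (T.symm x), T.apply_symm_apply]

lemma measurableSet_iterate_eq [StandardBorelSpace X] (T : X ≃ᵐ X) (N : ℕ) :
    MeasurableSet {x | (⇑T)^[N] x = x} :=
  measurableSet_eq_fun (T.measurable.iterate N) measurable_id

open Classical in
/-- The automorphism that agrees with `T` on the `T`-invariant set of fixed points of `T^N`, and is
the identity elsewhere. -/
noncomputable def truncate [StandardBorelSpace X] (T : X ≃ᵐ X) (N : ℕ) : X ≃ᵐ X where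
  toFun x := if (⇑T)^[N] x = x then T x else x
  invFun x := if (⇑T)^[N] x = x then T.symm x else x
  left_inv x := by
    by_cases h : (⇑T)^[N] x = x
    · simp [h, iterate_apply_eq_iff]
    · simp [h]
  right_inv x := by
    by_cases h : (⇑T)^[N] x = x
    · simp [h, iterate_symm_apply_eq_iff]
    · simp [h]
  measurable_toFun := T.measurable.ite (measurableSet_iterate_eq T N) measurable_id
  measurable_invFun := T.symm.measurable.ite (measurableSet_iterate_eq T N) measurable_id

section truncate

variable [StandardBorelSpace X] {T : X ≃ᵐ X} {N : ℕ} {x : X}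

lemma truncate_of_eq (h : (⇑T)^[N] x = x) : truncate T N x = T x := if_pos h

lemma truncate_of_ne (h : (⇑T)^[N] x ≠ x) : truncate T N x = x := if_neg h

lemma truncate_symm_of_eq (h : (⇑T)^[N] x = x) : (truncate T N).symm x = T.symm x := if_pos h

lemma truncate_iterate (h : (⇑T)^[N] x = x) (k : ℕ) :
    (⇑(truncate T N))^[k] x = (⇑T)^[k] x := by
  induction k generalizing x with
  | zero => rfl
  | succ k ih =>
    rw [Function.iterate_succ_apply, Function.iterate_succ_apply, truncate_of_eq h,
      ih ((iterate_apply_eq_iff T N x).2 h)]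

lemma truncate_mem_per0 (hN : 0 < N) : truncate T N ∈ (Per0Set : Set (X ≃ᵐ X)) := by
  refine ⟨N, hN, fun x => ?_⟩
  by_cases h : (⇑T)^[N] x = x
  · rw [truncate_iterate h, h]
  · exact Function.iterate_fixed (truncate_of_ne h) N

lemma Edis_truncate_subset (T T' : X ≃ᵐ X) (N : ℕ) :
    Edis (truncate T N) T' ⊆ {x | (⇑T)^[N] x = x}ᶜ ∪ Edis T T' := by
  intro x hx
  by_cases h : (⇑T)^[N] x = x
  · right
    simpa [Edis, truncate_of_eq h, truncate_symm_of_eq h] using hx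
  · exact Or.inl h

end truncate

lemma tendsto_measure_compl [StandardBorelSpace X] {T : X ≃ᵐ X}
    (hT : T ∈ (PerSet : Set (X ≃ᵐ X))) (μ : Measure X) [IsFiniteMeasure μ] :
    Tendsto (fun n : ℕ => μ {x | (⇑T)^[n.factorial] x = x}ᶜ) atTop (𝓝 0) := by
  have hempty : ⋂ n : ℕ, {x | (⇑T)^[n.factorial] x = x}ᶜ = ∅ := by
    refine eq_empty_of_forall_notMem fun x hx => ?_
    obtain ⟨m, hm, hx'⟩ := hT x
    refine mem_iInter.1 hx m ?_
    exact Function.IsPeriodicPt.trans_dvd (f := ⇑T) hx' (Nat.dvd_factorial hm le_rfl)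
  rw [← measure_empty (μ := μ), ← hempty]
  refine tendsto_measure_iInter_atTop
    (fun n => (measurableSet_iterate_eq T _).compl.nullMeasurableSet) ?_ ⟨0, measure_ne_top _ _⟩
  intro m n hmn
  refine compl_subset_compl.2 fun x hx => ?_
  exact Function.IsPeriodicPt.trans_dvd (f := ⇑T) hx (Nat.factorial_dvd_factorial hmn)

lemma tendsto_truncate [StandardBorelSpace X] {T : X ≃ᵐ X}
    (hT : T ∈ (PerSet : Set (X ≃ᵐ X))) :
    Tendsto (fun n : ℕ => truncate T n.factorial) atTop (@nhds _ tau T) := by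
  rw [tau, TopologicalSpace.tendsto_nhds_generateFrom_iff]
  -- A subbasic neighborhood of `T` need not be centered at `T`, hence the second automorphism `T'`.
  rintro _ ⟨T', M, ε, hM, -, rfl⟩ hmem
  refine (hM.1.eventually_all (l := atTop)).2 fun μ hμ => ?_
  have := hM.2 μ hμ
  have hlim := (tendsto_measure_compl hT μ).add_const (μ (Edis T T'))
  rw [zero_add] at hlim
  filter_upwards [hlim.eventually_lt_const (hmem μ hμ)] with n hn
  exact ((measure_mono (Edis_truncate_subset T T' _)).trans (measure_union_le _ _)).trans_lt hn

lemma closure_per0 [StandardBorelSpace X] :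
    @closure (X ≃ᵐ X) tau Per0Set = @closure (X ≃ᵐ X) tau PerSet := by
  let _ : TopologicalSpace (X ≃ᵐ X) := tau
  refine Subset.antisymm (closure_mono ?_) (closure_minimal ?_ isClosed_closure)
  · rintro T ⟨N, hN, h⟩ x
    exact ⟨N, hN, h x⟩
  · intro T hT
    exact mem_closure_of_tendsto (tendsto_truncate hT)
      (Eventually.of_forall fun n => truncate_mem_per0 n.factorial_pos)

/-- (1) For every `x` and `n ≥ 1`, `Per_n(x)` is clopen with respect to each of
`τ`, `τ''`, `p`, `p̄`.  (2) The `τ`-closure of `Per₀` equals the `τ`-closure of `Per`.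
(3) `Ap` and each `Per_n` (`n ≥ 1`) are closed with respect to each of these topologies. -/
theorem periodic_sets_closed {X : Type*} [MeasurableSpace X] [StandardBorelSpace X]
    [Uncountable X] :
    (∀ (x : X) (n : ℕ), 1 ≤ n →
      (@IsClosed (X ≃ᵐ X) tau (PerNAt n x) ∧ @IsOpen (X ≃ᵐ X) tau (PerNAt n x)) ∧
      (@IsClosed (X ≃ᵐ X) tau'' (PerNAt n x) ∧ @IsOpen (X ≃ᵐ X) tau'' (PerNAt n x)) ∧
      (@IsClosed (X ≃ᵐ X) pTop (PerNAt n x) ∧ @IsOpen (X ≃ᵐ X) pTop (PerNAt n x)) ∧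
      (@IsClosed (X ≃ᵐ X) pBar (PerNAt n x) ∧ @IsOpen (X ≃ᵐ X) pBar (PerNAt n x))) ∧
    @closure (X ≃ᵐ X) tau Per0Set = @closure (X ≃ᵐ X) tau PerSet ∧
    (@IsClosed (X ≃ᵐ X) tau ApSet ∧ @IsClosed (X ≃ᵐ X) tau'' ApSet ∧
      @IsClosed (X ≃ᵐ X) pTop ApSet ∧ @IsClosed (X ≃ᵐ X) pBar ApSet) ∧
    (∀ n : ℕ, 1 ≤ n →
      @IsClosed (X ≃ᵐ X) tau (PerN n) ∧ @IsClosed (X ≃ᵐ X) tau'' (PerN n) ∧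
      @IsClosed (X ≃ᵐ X) pTop (PerN n) ∧ @IsClosed (X ≃ᵐ X) pBar (PerN n)) := by
  have key {t : TopologicalSpace (X ≃ᵐ X)} (h : PointOpen t) (x : X) (n : ℕ) :
      @IsClosed _ t (PerNAt n x) ∧ @IsOpen _ t (PerNAt n x) := h.isClopen_perNAt x n
  refine ⟨fun x n _ => ⟨key pointOpen_tau x n, key pointOpen_tau'' x n, key pointOpen_pTop x n,
    key pointOpen_pBar x n⟩, closure_per0, ?_, fun n _ => ?_⟩
  · exact ⟨pointOpen_tau.isClosed_ap, pointOpen_tau''.isClosed_ap, pointOpen_pTop.isClosed_ap,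
      pointOpen_pBar.isClosed_ap⟩
  · exact ⟨pointOpen_tau.isClosed_perN n, pointOpen_tau''.isClosed_perN n,
      pointOpen_pTop.isClosed_perN n, pointOpen_pBar.isClosed_perN n⟩

end BDK
end

section
/- For every T ∈ Aut(X,𝓑), the full group [T] = {γ ∈ Aut(X,𝓑) : for every x ∈ X there is m ∈ ℤ with γx = Tᵐx} is closed in Aut(X,𝓑) with respect to each of the topologies τ, τ'', p and p̄. -/
/-!
Membership in `[T]` is a pointwise condition: it constrains each value `γ x` separately. Hence if
`γ ∉ [T]` is witnessed by the point `x`, every `S` with `S x = γ x` is outside `[T]` as well, and it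
suffices that each of the topologies contains, for all `γ` and `x`, a neighborhood of `γ` on which
the value at `x` is constant (`isClosed_fullGroup_of_eval`). Basic neighborhoods of `γ` with this
property come from the Dirac mass at `x` (for `τ` and `τ''`), from the Borel set `{x}` (for `p`), and
from `{x}` together with the Dirac mass at `γ x` (for `p̄`).
-/

open MeasureTheory Set Filter Topology
open scoped ENNReal

namespace BDK

variable {X : Type*} [MeasurableSpace X]

/-- If every evaluation `γ ↦ γ x` is locally constant for the topology `t`, then full groups are
`t`-closed. -/
lemma isClosed_fullGroup_of_eval (t : TopologicalSpace (X ≃ᵐ X)) (T : X ≃ᵐ X)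
    (h : ∀ (γ : X ≃ᵐ X) (x : X), ∃ O, IsOpen[t] O ∧ γ ∈ O ∧ ∀ S ∈ O, S x = γ x) :
    @IsClosed (X ≃ᵐ X) t (fullGroup T) := by
  let := t
  rw [← isOpen_compl_iff, isOpen_iff_forall_mem_open]
  intro γ hγ
  obtain ⟨x, hx⟩ : ∃ x, ¬ ∃ m : ℤ, γ x = (T.toEquiv ^ m) x := by
    by_contra hcon
    push Not at hcon
    exact hγ hcon
  obtain ⟨O, hO, hmem, hS⟩ := h γ x
  refine ⟨O, fun S hSO hST => hx ?_, hO, hmem⟩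
  rw [← hS S hSO]
  exact hST x

lemma tau_eval [MeasurableSingletonClass X] (γ : X ≃ᵐ X) (x : X) :
    ∃ O, IsOpen[tau] O ∧ γ ∈ O ∧ ∀ S ∈ O, S x = γ x := by
  refine ⟨tauBall γ {Measure.dirac x} 1,
    .basic _ ⟨γ, _, 1, isProbFamily_dirac x, one_pos, rfl⟩, ?_, fun S hS => ?_⟩
  · rintro μ rfl
    simp [Edis]
  · by_contra hne
    have h1 := hS _ rfl
    rw [Measure.dirac_apply, indicator_of_mem (show x ∈ Edis S γ from Or.inl hne)] at h1
    simp at h1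

lemma tau''_eval [MeasurableSingletonClass X] (γ : X ≃ᵐ X) (x : X) :
    ∃ O, IsOpen[tau''] O ∧ γ ∈ O ∧ ∀ S ∈ O, S x = γ x := by
  refine ⟨tau''Ball γ {Measure.dirac x} 1,
    .basic _ ⟨γ, _, 1, isProbFamily_dirac x, one_pos, rfl⟩, ?_, fun S hS => ?_⟩
  · rintro μ rfl
    simp
  · by_contra hne
    have h1 := hS _ rfl
    simp only [Measure.map_dirac' S.measurable, Measure.map_dirac' γ.measurable,
      integral_dirac] at h1
    refine absurd h1 (not_lt.mpr ?_)
    -- The real-valued supremum is only meaningful because it is bounded, here by `2`.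
    have hbdd : BddAbove (range fun f : X → ℝ =>
        ⨆ _ : f ∈ (BorelUnitBall : Set (X → ℝ)), |f (S x) - f (γ x)|) := by
      refine ⟨2, ?_⟩
      rintro _ ⟨f, rfl⟩
      refine Real.iSup_le (fun hf => ?_) zero_le_two
      have h2 := abs_sub (f (S x)) (f (γ x))
      linarith [hf.2 (S x), hf.2 (γ x)]
    let g : X → ℝ := indicator {γ x} 1
    have hg : g ∈ (BorelUnitBall : Set (X → ℝ)) := by
      refine ⟨measurable_one.indicator (measurableSet_singleton _), fun y => ?_⟩
      by_cases hy : y = γ x <;> simp [g, hy]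
    refine le_trans ?_ (le_ciSup hbdd g)
    rw [ciSup_pos hg]
    simp [g, hne]

lemma pTop_eval [MeasurableSingletonClass X] (γ : X ≃ᵐ X) (x : X) :
    ∃ O, IsOpen[pTop] O ∧ γ ∈ O ∧ ∀ S ∈ O, S x = γ x := by
  refine ⟨pBall γ {{x}}, .basic _ ⟨γ, _, ⟨finite_singleton _, ?_⟩, rfl⟩,
    fun A _ => rfl, fun S hS => ?_⟩
  · rintro A rfl
    exact measurableSet_singleton x
  · simpa using hS _ rfl

lemma pBar_eval [MeasurableSingletonClass X] (γ : X ≃ᵐ X) (x : X) :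
    ∃ O, IsOpen[pBar] O ∧ γ ∈ O ∧ ∀ S ∈ O, S x = γ x := by
  refine ⟨pBarBall γ {{x}} {Measure.dirac (γ x)} 1,
    .basic _ ⟨γ, _, _, 1, ⟨finite_singleton _, ?_⟩, isProbFamily_dirac (γ x), one_pos, rfl⟩,
    ?_, fun S hS => ?_⟩
  · rintro A rfl
    exact measurableSet_singleton x
  · rintro A rfl μ rfl
    simp
  · by_contra hne
    have h1 := lt_of_le_of_lt le_self_add (hS _ rfl _ rfl)
    have hmem : γ x ∈ symmDiff (S '' {x}) (γ '' {x}) := by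
      refine Or.inr ⟨⟨x, rfl, rfl⟩, ?_⟩
      simpa using Ne.symm hne
    rw [Measure.dirac_apply, indicator_of_mem hmem] at h1
    simp at h1

/-- For every `T`, the full group `[T]` is closed with respect to each of the topologies
`τ`, `τ''`, `p` and `p̄`. -/
theorem fullGroup_closed {X : Type*} [MeasurableSpace X] [StandardBorelSpace X]
    [Uncountable X] (T : X ≃ᵐ X) :
    @IsClosed (X ≃ᵐ X) tau (fullGroup T) ∧ @IsClosed (X ≃ᵐ X) tau'' (fullGroup T) ∧
    @IsClosed (X ≃ᵐ X) pTop (fullGroup T) ∧ @IsClosed (X ≃ᵐ X) pBar (fullGroup T) := by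
  exact ⟨isClosed_fullGroup_of_eval _ T tau_eval, isClosed_fullGroup_of_eval _ T tau''_eval,
    isClosed_fullGroup_of_eval _ T pTop_eval, isClosed_fullGroup_of_eval _ T pBar_eval⟩

end BDK
end

section
/- Let T ∈ Aut(X,𝓑) be aperiodic. Then there exists a sequence (Aₙ)_{n≥0} of Borel subsets of X such that: (i) X = A₀ ⊇ A₁ ⊇ A₂ ⊇ ⋯; (ii) ⋂ₙ Aₙ = ∅; (iii) for every n ≥ 1, both Aₙ and X ∖ Aₙ meet every T-orbit; (iv) for every n ≥ 1, every point x ∈ Aₙ satisfies Tᵏx ∈ Aₙ for infinitely many k > 0 and for infinitely many k < 0; (v) for every n ≥ 1, Aₙ ∩ Tⁱ(Aₙ) = ∅ for i = 1,…,n−1; (vi) for every n ≥ 1 and every k ≥ 1, the first-return set C_k(n) = {x ∈ Aₙ : Tᵏx ∈ Aₙ and Tⁱx ∉ Aₙ for 0 < i < k} is either empty or uncountable. -/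
/-!
Write `T ^ k` for the integer powers of `T`, and call `B` bi-recurrent if every orbit visits `B`
at arbitrarily large positive and negative times.

*Thinning.* A standard Borel space injects measurably into `ℝ`, so aperiodicity lets one cover `X`
by countably many Borel sets, each disjoint from its first `n` translates. Going through the cover
and greedily keeping the points of a bi-recurrent Borel set `B` that are more than `n` steps away
from all points kept before gives a Borel `n`-spaced subset of `B` which is maximal: every point
of `B` is within `n` steps of it. Hence the subset is again bi-recurrent (`exists_thin`).

*Vanishing.* Iterating gives a decreasing sequence `B n` of bi-recurrent sets with `B n`
`n`-spaced. Its intersection meets every orbit in at most one point, so it can be removed without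
losing bi-recurrence (`exists_markers`).

*Uncountable return sets.* Let `Z` be the union of the orbits meeting a countable first-return
set; it is countable and invariant. Fix `y ∉ Z` and let `φ` be the identity off `Z` and map each
orbit in `Z` equivariantly onto the orbit of `y` (`exists_equivariant_retract`). All the other
properties pull back along the equivariant Borel map `φ`, and every nonempty first-return set of
the pulled-back sequence contains an uncountable first-return set of the old one, up to the
countable set `Z`.
-/

open MeasureTheory Set Filter Topology
open scoped ENNReal

namespace BDK

variable {X : Type*} [MeasurableSpace X]

/-! ### Markers and integer powers -/

/-- Every `T`-orbit visits `B` at arbitrarily large positive and negative times. -/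
def BiRecurrent (T : X ≃ᵐ X) (B : Set X) : Prop :=
  ∀ x, ∀ N : ℤ, (∃ k, N ≤ k ∧ (T.toEquiv ^ k) x ∈ B) ∧ (∃ k, k ≤ N ∧ (T.toEquiv ^ k) x ∈ B)

/-- Distinct points of `B` on a common orbit are more than `n` steps apart. -/
def Spaced (T : X ≃ᵐ X) (n : ℕ) (B : Set X) : Prop :=
  ∀ x ∈ B, ∀ i : ℤ, 1 ≤ i → i ≤ n → (T.toEquiv ^ i) x ∉ B

/-- The points of `A` whose first return to `A` happens at time `k`. -/
def firstReturn (T : X ≃ᵐ X) (A : Set X) (k : ℕ) : Set X :=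
  {x ∈ A | (⇑T)^[k] x ∈ A ∧ ∀ i, 0 < i → i < k → (⇑T)^[i] x ∉ A}

lemma zpow_add_app (T : X ≃ᵐ X) (a b : ℤ) (x : X) :
    (T.toEquiv ^ a) ((T.toEquiv ^ b) x) = (T.toEquiv ^ (a + b)) x := by
  rw [zpow_add, Equiv.Perm.mul_apply]

lemma npow_app (T : X ≃ᵐ X) (n : ℕ) (x : X) : (T.toEquiv ^ (n : ℤ)) x = (⇑T)^[n] x := by
  rw [zpow_natCast]
  exact congrFun (Equiv.Perm.coe_pow T.toEquiv n) x

lemma measurable_zpow_app (T : X ≃ᵐ X) (k : ℤ) : Measurable fun x => (T.toEquiv ^ k) x := by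
  obtain ⟨n, rfl | rfl⟩ := k.eq_nat_or_neg
  · simp only [npow_app]
    exact T.measurable.iterate n
  · have h : ∀ x, (T.toEquiv ^ (-(n : ℤ))) x = (⇑T.symm)^[n] x := by
      intro x
      rw [zpow_neg, ← inv_zpow, zpow_natCast]
      exact congrFun (Equiv.Perm.coe_pow (T.toEquiv⁻¹) n) x
    simp only [h]
    exact T.symm.measurable.iterate n

lemma zpow_app_ne {T : X ≃ᵐ X} (hT : T ∈ ApSet) {k : ℤ} (hk : k ≠ 0) (x : X) :
    (T.toEquiv ^ k) x ≠ x := by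
  intro h
  rcases lt_or_gt_of_ne hk with hk | hk
  · have h2 : (T.toEquiv ^ (-k)) x = x := by
      conv_lhs => rw [← h]
      rw [zpow_add_app]; simp
    lift -k to ℕ using by omega with n hn
    rw [npow_app] at h2
    exact hT x n (by omega) h2
  · lift k to ℕ using hk.le
    rw [npow_app] at h
    exact hT x k (by omega) h

lemma zpow_app_inj {T : X ≃ᵐ X} (hT : T ∈ ApSet) {a b : ℤ} {x : X}
    (h : (T.toEquiv ^ a) x = (T.toEquiv ^ b) x) : a = b := by
  by_contra hab
  apply zpow_app_ne hT (k := a - b) (by omega) ((T.toEquiv ^ b) x)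
  rw [zpow_add_app, sub_add_cancel, h]

/-! ### Thinning a bi-recurrent set -/

/-- `X` is covered by countably many Borel sets, each disjoint from its first `n` translates. -/
lemma exists_spaced_cover [StandardBorelSpace X] {T : X ≃ᵐ X} (hT : T ∈ ApSet) (n : ℕ) :
    ∃ D : ℕ → Set X, (∀ j, MeasurableSet (D j)) ∧ (∀ j, Spaced T n (D j)) ∧
      ∀ x, ∃ j, x ∈ D j := by
  have hf := measurableEmbedding_embeddingReal X
  set f := embeddingReal X
  have hb := TopologicalSpace.isBasis_countableBasis ℝ
  have hne : (TopologicalSpace.countableBasis ℝ).Nonempty := by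
    obtain ⟨v, hv, -⟩ := hb.exists_subset_of_mem_open (mem_univ (0 : ℝ)) isOpen_univ
    exact ⟨v, hv⟩
  obtain ⟨U, hU⟩ := (TopologicalSpace.countable_countableBasis ℝ).exists_eq_range hne
  have hUm : ∀ j, MeasurableSet (U j) := fun j =>
    (hb.isOpen (hU ▸ mem_range_self j)).measurableSet
  refine ⟨fun j => f ⁻¹' U j ∩
    ⋂ i ∈ Finset.Icc (1 : ℤ) n, (fun x => f ((T.toEquiv ^ i) x)) ⁻¹' (U j)ᶜ, ?_, ?_, ?_⟩
  · intro j
    refine (hf.measurable (hUm j)).inter (Finset.measurableSet_biInter _ fun i _ => ?_)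
    exact (hf.measurable.comp (measurable_zpow_app T i)) (hUm j).compl
  · rintro j x ⟨-, hx⟩ i h1 h2 ⟨h, -⟩
    simp only [mem_iInter] at hx
    exact hx i (Finset.mem_Icc.2 ⟨h1, h2⟩) h
  · intro x
    have hfin : ((fun i : ℤ => f ((T.toEquiv ^ i) x)) '' (Finset.Icc (1 : ℤ) n)).Finite :=
      (Finset.finite_toSet _).image _
    obtain ⟨v, hv, hxv, hsub⟩ := hb.exists_subset_of_mem_open (a := f x) (u := _ᶜ) (by
      rintro ⟨i, hi, h⟩
      have hi' := Finset.mem_Icc.1 (Finset.mem_coe.1 hi)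
      exact zpow_app_ne hT (by omega) x (hf.injective h)) hfin.isClosed.isOpen_compl
    rw [hU] at hv
    obtain ⟨j, rfl⟩ := hv
    refine ⟨j, hxv, ?_⟩
    simp only [mem_iInter]
    exact fun i hi h => hsub h ⟨i, hi, rfl⟩

/-- Stages of the greedy selection from `B` along the cover `D`: stage `j` adds the points of
`B ∩ D j` that are more than `n` steps away from everything selected so far. -/
def greedy (T : X ≃ᵐ X) (n : ℕ) (B : Set X) (D : ℕ → Set X) : ℕ → Set X
  | 0 => ∅
  | j + 1 => greedy T n B D j ∪ ((B ∩ D j) ∩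
      ⋂ i ∈ Finset.Icc (-n : ℤ) n, (fun x => (T.toEquiv ^ i) x) ⁻¹' (greedy T n B D j)ᶜ)

/-- The greedy selection is a maximal `n`-spaced subset of `B`, so it comes within `n` steps of every
point of `B` and inherits bi-recurrence. -/
lemma exists_thin [StandardBorelSpace X] {T : X ≃ᵐ X} (hT : T ∈ ApSet) (n : ℕ) (B : Set X)
    (hB : MeasurableSet B) (hr : BiRecurrent T B) :
    ∃ B' ⊆ B, MeasurableSet B' ∧ BiRecurrent T B' ∧ Spaced T n B' := by
  obtain ⟨D, hDm, hDs, hDc⟩ := exists_spaced_cover hT n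
  set S := greedy T n B D with hS
  have hmono : Monotone S := monotone_nat_of_le_succ fun j => subset_union_left
  have hmem : ∀ j x, x ∈ S (j + 1) ↔ x ∈ S j ∨ ((x ∈ B ∧ x ∈ D j) ∧
      ∀ i : ℤ, -n ≤ i → i ≤ n → (T.toEquiv ^ i) x ∉ S j) := by
    intro j x
    simp [hS, greedy]
  have hSm : ∀ j, MeasurableSet (S j) := by
    intro j
    induction j with
    | zero => exact MeasurableSet.empty
    | succ j ih =>
      refine ih.union ((hB.inter (hDm j)).inter (Finset.measurableSet_biInter _ fun i _ => ?_))
      exact measurable_zpow_app T i ih.compl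
  have hSB : ∀ j, S j ⊆ B := by
    intro j
    induction j with
    | zero => exact empty_subset _
    | succ j ih =>
      intro x hx
      rcases (hmem j x).1 hx with h | h
      exacts [ih h, h.1.1]
  have hSs : ∀ j, Spaced T n (S j) := by
    intro j
    induction j with
    | zero => exact fun x hx => absurd hx (notMem_empty x)
    | succ j ih =>
      intro x hx i h1 h2 hix
      rcases (hmem j _).1 hx with h | h <;> rcases (hmem j _).1 hix with h' | h'
      · exact ih x h i h1 h2 h'
      · apply h'.2 (-i) (by omega) (by omega)
        rw [zpow_add_app]
        simpa using h
      · exact h.2 i (by omega) h2 h'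
      · exact hDs j x h.1.2 i h1 h2 h'.1.2
  have hmax : ∀ x ∈ B, ∃ i : ℤ, -n ≤ i ∧ i ≤ n ∧ (T.toEquiv ^ i) x ∈ ⋃ j, S j := by
    intro x hx
    obtain ⟨j, hj⟩ := hDc x
    by_cases h : ∀ i : ℤ, -n ≤ i → i ≤ n → (T.toEquiv ^ i) x ∉ S j
    · exact ⟨0, by omega, by omega, mem_iUnion.2 ⟨j + 1, (hmem j _).2 (Or.inr ⟨⟨hx, hj⟩, h⟩)⟩⟩
    · push Not at h
      obtain ⟨i, h1, h2, h3⟩ := h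
      exact ⟨i, h1, h2, mem_iUnion.2 ⟨j, h3⟩⟩
  refine ⟨⋃ j, S j, iUnion_subset hSB, MeasurableSet.iUnion hSm, ?_, ?_⟩
  · intro x N
    constructor
    · obtain ⟨k, hk, hkB⟩ := (hr x (N + n)).1
      obtain ⟨i, h1, h2, h3⟩ := hmax _ hkB
      rw [zpow_add_app] at h3
      exact ⟨i + k, by omega, h3⟩
    · obtain ⟨k, hk, hkB⟩ := (hr x (N - n)).2
      obtain ⟨i, h1, h2, h3⟩ := hmax _ hkB
      rw [zpow_add_app] at h3
      exact ⟨i + k, by omega, h3⟩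
  · intro x hx i h1 h2 hix
    obtain ⟨a, ha⟩ := mem_iUnion.1 hx
    obtain ⟨b, hb⟩ := mem_iUnion.1 hix
    exact hSs (max a b) x (hmono (le_max_left a b) ha) i h1 h2 (hmono (le_max_right a b) hb)

/-! ### The vanishing sequence -/

/-- A vanishing sequence of markers, without the condition on first-return sets. -/
lemma exists_markers [StandardBorelSpace X] {T : X ≃ᵐ X} (hT : T ∈ ApSet) :
    ∃ A : ℕ → Set X, (∀ n, MeasurableSet (A n)) ∧ A 0 = univ ∧ (∀ n, A (n + 1) ⊆ A n) ∧
      (⋂ n, A n) = ∅ ∧ (∀ n, BiRecurrent T (A n)) ∧ ∀ n, Spaced T n (A n) := by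
  let P := {B : Set X // MeasurableSet B ∧ BiRecurrent T B}
  choose th hsub hmeas hrec hsp using fun (n : ℕ) (B : P) => exists_thin hT n B.1 B.2.1 B.2.2
  let B : ℕ → P := fun n => Nat.rec
    ⟨univ, MeasurableSet.univ, fun x N => ⟨⟨N, le_rfl, trivial⟩, ⟨N, le_rfl, trivial⟩⟩⟩
    (fun n b => ⟨th (n + 1) b, hmeas _ _, hrec _ _⟩) n
  have hB0 : (B 0).1 = univ := rfl
  have hBs : ∀ n, (B (n + 1)).1 ⊆ (B n).1 := fun n => hsub (n + 1) (B n)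
  have hBsp : ∀ n, Spaced T n (B n).1 := by
    intro n
    cases n with
    | zero => intro x _ i h1 h2; simp at h2; omega
    | succ n => exact hsp (n + 1) (B n)
  set V : Set X := ⋂ n, (B n).1 with hV
  have hVB : ∀ n, V ⊆ (B n).1 := fun n => iInter_subset _ n
  have hV1 : ∀ x ∈ V, ∀ i : ℤ, 1 ≤ i → (T.toEquiv ^ i) x ∉ V := fun x hx i hi h =>
    hBsp i.toNat x (hVB _ hx) i hi (by omega) (hVB _ h)
  -- A visit to `V` can be replaced by the next visit to `B n`, since `V` is met at most once.
  have hBr : ∀ n, BiRecurrent T ((B n).1 \ V) := by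
    intro n x N
    constructor
    · obtain ⟨k, hk, hkB⟩ := ((B n).2.2 x N).1
      by_cases hkV : (T.toEquiv ^ k) x ∈ V
      · obtain ⟨l, hl, hlB⟩ := ((B n).2.2 x (k + 1)).1
        refine ⟨l, by omega, hlB, fun h => hV1 _ hkV (l - k) (by omega) ?_⟩
        rwa [zpow_add_app, sub_add_cancel]
      · exact ⟨k, hk, hkB, hkV⟩
    · obtain ⟨k, hk, hkB⟩ := ((B n).2.2 x N).2
      by_cases hkV : (T.toEquiv ^ k) x ∈ V
      · obtain ⟨l, hl, hlB⟩ := ((B n).2.2 x (k - 1)).2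
        refine ⟨l, by omega, hlB, fun h => hV1 _ h (k - l) (by omega) ?_⟩
        rwa [zpow_add_app, sub_add_cancel]
      · exact ⟨k, hk, hkB, hkV⟩
  have hVm : MeasurableSet V := MeasurableSet.iInter fun n => (B n).2.1
  refine ⟨fun n => if n = 0 then univ else (B n).1 \ V, ?_, rfl, ?_, ?_, ?_, ?_⟩
  · intro n
    dsimp only
    split_ifs
    exacts [MeasurableSet.univ, (B n).2.1.diff hVm]
  · intro n
    by_cases hn : n = 0
    · simp [hn]
    · simpa [hn] using sdiff_subset_sdiff_left (hBs n)
  · ext x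
    simp only [mem_iInter, mem_empty_iff_false, iff_false]
    intro h
    refine (h 1).2 (mem_iInter.2 fun n => ?_)
    cases n with
    | zero => trivial
    | succ n => exact (h (n + 1)).1
  · intro n
    by_cases hn : n = 0
    · subst hn; exact (B 0).2.2
    · simpa [hn] using hBr n
  · intro n
    by_cases hn : n = 0
    · subst hn; intro x _ i h1 h2; simp at h2; omega
    · simp only [hn, if_false]
      exact fun x hx i h1 h2 h => hBsp n x hx.1 i h1 h2 h.1

/-! ### Removing countable first-return sets -/

/-- A countable invariant set `Z` can be moved off itself by an equivariant Borel map: each of its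
orbits is sent onto the orbit of a fixed point `y ∉ Z`. -/
lemma exists_equivariant_retract [StandardBorelSpace X] {T : X ≃ᵐ X} (hT : T ∈ ApSet)
    {Z : Set X} (hZ : Z.Countable) (hinv : ∀ x, ∀ k : ℤ, (T.toEquiv ^ k) x ∈ Z ↔ x ∈ Z)
    {y : X} (hy : y ∉ Z) :
    ∃ φ : X → X, Measurable φ ∧ (∀ x, ∀ k : ℤ, φ ((T.toEquiv ^ k) x) = (T.toEquiv ^ k) (φ x)) ∧
      (∀ x, φ x ∉ Z) ∧ ∀ x ∉ Z, φ x = x := by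
  classical
  let s := Equiv.Perm.SameCycle.setoid T.toEquiv
  let rep : X → X := fun x => (Quotient.mk s x).out
  have hrep : ∀ x, ∃ m : ℤ, (T.toEquiv ^ m) (rep x) = x := fun x =>
    Quotient.exact (Quotient.out_eq (Quotient.mk s x))
  choose m hm using hrep
  have hrepT : ∀ x, ∀ k : ℤ, rep ((T.toEquiv ^ k) x) = rep x := by
    intro x k
    have : Quotient.mk s ((T.toEquiv ^ k) x) = Quotient.mk s x :=
      (Quotient.sound (show Equiv.Perm.SameCycle T.toEquiv x _ from ⟨k, rfl⟩)).symm
    simp only [rep, this]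
  have hmT : ∀ x, ∀ k : ℤ, m ((T.toEquiv ^ k) x) = k + m x := by
    intro x k
    apply zpow_app_inj hT (x := rep x)
    rw [← zpow_add_app, hm x]
    conv_lhs => rw [← hrepT x k]
    exact hm _
  refine ⟨fun x => if x ∈ Z then (T.toEquiv ^ (m x)) y else x, ?_, ?_, ?_, ?_⟩
  · intro A hA
    have : (fun x => if x ∈ Z then (T.toEquiv ^ (m x)) y else x) ⁻¹' A =
        (A \ Z) ∪ {x ∈ Z | (T.toEquiv ^ (m x)) y ∈ A} := by
      ext x
      by_cases hx : x ∈ Z <;> simp [hx]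
    rw [this]
    exact (hA.diff hZ.measurableSet).union (hZ.mono (sep_subset _ _)).measurableSet
  · intro x k
    by_cases hx : x ∈ Z
    · simp only [hinv, hx, if_true, hmT, zpow_add_app]
    · simp only [hinv, hx, if_false]
  · intro x
    by_cases hx : x ∈ Z
    · simpa only [hx, if_true, hinv] using hy
    · simpa only [hx, if_false] using hx
  · intro x hx
    simp only [hx, if_false]

lemma BiRecurrent.infinite {T : X ≃ᵐ X} {B : Set X} (h : BiRecurrent T B) (x : X) :
    {k : ℤ | 0 < k ∧ (T.toEquiv ^ k) x ∈ B}.Infinite ∧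
      {k : ℤ | k < 0 ∧ (T.toEquiv ^ k) x ∈ B}.Infinite := by
  constructor
  · apply infinite_of_not_bddAbove
    rintro ⟨b, hb⟩
    obtain ⟨k, hk, hkB⟩ := (h x (max b 0 + 1)).1
    have := hb (show k ∈ _ from ⟨by omega, hkB⟩)
    omega
  · apply infinite_of_not_bddBelow
    rintro ⟨b, hb⟩
    obtain ⟨k, hk, hkB⟩ := (h x (min b 0 - 1)).2
    have := hb (show k ∈ _ from ⟨by omega, hkB⟩)
    omega

/-- Existence of a vanishing sequence of markers for any aperiodic Borel automorphism:
a decreasing sequence `(Aₙ)` of Borel sets with `A₀ = X`, empty intersection, such that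
each `Aₙ` and its complement are complete `T`-sections, every point of `Aₙ` is recurrent,
`Aₙ ∩ Tⁱ(Aₙ) = ∅` for `i = 1,…,n−1`, and every nonempty first-return set is uncountable. -/
theorem exists_vanishing_markers {X : Type*} [MeasurableSpace X] [StandardBorelSpace X]
    [Uncountable X] (T : X ≃ᵐ X) (hT : T ∈ ApSet) :
    ∃ A : ℕ → Set X,
      (∀ n, MeasurableSet (A n)) ∧
      A 0 = univ ∧
      (∀ n, A (n + 1) ⊆ A n) ∧
      (⋂ n, A n) = ∅ ∧
      (∀ n, 1 ≤ n → ∀ x : X,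
        (∃ m : ℤ, (T.toEquiv ^ m) x ∈ A n) ∧ (∃ m : ℤ, (T.toEquiv ^ m) x ∈ (A n)ᶜ)) ∧
      (∀ n, 1 ≤ n → ∀ x ∈ A n,
        {k : ℤ | 0 < k ∧ (T.toEquiv ^ k) x ∈ A n}.Infinite ∧
        {k : ℤ | k < 0 ∧ (T.toEquiv ^ k) x ∈ A n}.Infinite) ∧
      (∀ n, 1 ≤ n → ∀ i, 1 ≤ i → i < n → A n ∩ (⇑T)^[i] '' (A n) = ∅) ∧
      (∀ n, 1 ≤ n → ∀ k, 1 ≤ k →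
        {x ∈ A n | (⇑T)^[k] x ∈ A n ∧ ∀ i, 0 < i → i < k → (⇑T)^[i] x ∉ A n} = ∅ ∨
        ¬ {x ∈ A n | (⇑T)^[k] x ∈ A n ∧ ∀ i, 0 < i → i < k → (⇑T)^[i] x ∉ A n}.Countable) := by
  obtain ⟨A, hAm, hA0, hAs, hAi, hAr, hAsp⟩ := exists_markers hT
  let Z₀ : Set X := ⋃ p : {p : ℕ × ℕ // (firstReturn T (A p.1) p.2).Countable},
    firstReturn T (A p.1.1) p.1.2
  have hZ₀ : Z₀.Countable := countable_iUnion fun p => p.2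
  let Z : Set X := ⋃ m : ℤ, (T.toEquiv ^ m) ⁻¹' Z₀
  have hZ : Z.Countable := countable_iUnion fun m =>
    hZ₀.preimage_of_injOn (T.toEquiv ^ m).injective.injOn
  have hinv : ∀ x, ∀ k : ℤ, (T.toEquiv ^ k) x ∈ Z ↔ x ∈ Z := by
    intro x k
    simp only [Z, mem_iUnion, mem_preimage, zpow_add_app]
    exact ⟨fun ⟨m, h⟩ => ⟨m + k, h⟩, fun ⟨m, h⟩ => ⟨m - k, by rwa [sub_add_cancel]⟩⟩
  obtain ⟨y, hy⟩ : ∃ y, y ∉ Z := by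
    by_contra! h
    exact not_countable_univ (hZ.mono fun x _ => h x)
  obtain ⟨φ, hφm, hφT, hφZ, hφid⟩ := exists_equivariant_retract hT hZ hinv hy
  have hφit : ∀ k x, φ ((⇑T)^[k] x) = (⇑T)^[k] (φ x) := by
    intro k x
    rw [← npow_app, hφT, npow_app]
  have hr : ∀ n, BiRecurrent T (φ ⁻¹' A n) := by
    intro n x N
    simp only [mem_preimage, hφT]
    exact hAr n (φ x) N
  have hsp : ∀ n, Spaced T n (φ ⁻¹' A n) := by
    intro n x hx i h1 h2
    simp only [mem_preimage, hφT]
    exact hAsp n (φ x) hx i h1 h2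
  refine ⟨fun n => φ ⁻¹' A n, fun n => hφm (hAm n), by simp [hA0],
    fun n => preimage_mono (hAs n), by rw [← preimage_iInter, hAi, preimage_empty], ?_,
    fun n _ x _ => (hr n).infinite x, ?_, ?_⟩
  · intro n hn x
    obtain ⟨k, -, hk⟩ := (hr n x 0).1
    refine ⟨⟨k, hk⟩, 1 + k, ?_⟩
    rw [← zpow_add_app]
    exact hsp n _ hk 1 le_rfl (by exact_mod_cast hn)
  · intro n _ i h1 h2
    ext z
    simp only [mem_inter_iff, mem_image, mem_empty_iff_false, iff_false, not_and]
    rintro hz ⟨x, hx, rfl⟩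
    refine hsp n x hx i (by exact_mod_cast h1) (by exact_mod_cast h2.le) ?_
    rwa [npow_app]
  · intro n _ k _
    change firstReturn T (φ ⁻¹' A n) k = ∅ ∨ ¬ (firstReturn T (φ ⁻¹' A n) k).Countable
    have hC : firstReturn T (φ ⁻¹' A n) k = φ ⁻¹' firstReturn T (A n) k := by
      ext x
      simp only [firstReturn, mem_ofPred_eq, mem_preimage, hφit]
    rw [hC, or_iff_not_imp_left, ← ne_eq, ← nonempty_iff_ne_empty]
    rintro ⟨x, hx⟩ hc
    -- `φ x ∉ Z` lies in this first-return set of `A n`, which is therefore uncountable.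
    have hun : ¬ (firstReturn T (A n) k).Countable := fun h =>
      hφZ x (mem_iUnion.2 ⟨0, mem_iUnion.2 ⟨⟨(n, k), h⟩, hx⟩⟩)
    refine hun ((hc.union hZ).mono fun w hw => ?_)
    by_cases hwZ : w ∈ Z
    · exact Or.inr hwZ
    · left
      rw [mem_preimage, hφid w hwZ]
      exact hw

end BDK
end

section
/- Let T ∈ Aut(X,𝓑) be aperiodic. Then there exists a sequence (Pₙ) of pointwise periodic Borel automorphisms, all belonging to the full group [T], such that Pₙ converges to T in the uniform topology τ. -/
/-!
The approximants come from cutting each orbit of `T` into finite blocks and closing every block up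
into a cycle. If a Borel set `C` meets every forward and every backward half-orbit, call the points
of `C` the first points of blocks, and let `P` act as `T` inside a block and send the last point of
a block back to its first point. Then `P` is Borel, pointwise periodic, lies in `[T]`, and differs
from `T` (inverses included) only on `C ∪ T⁻¹ C` (`exists_periodic_of_cut`). So it is enough to find
Borel sets `Cₙ` as above such that every point lies in only finitely many of them: then
`μ (Cₙ ∪ T⁻¹ Cₙ) → 0` for every finite measure `μ`.

Such sets arise from a bounded injective Borel function `f : X → ℝ` (`exists_vanishing_markers`).
The function `L x = liminf f (Tᵏ x)` is Borel and `T`-invariant, and along the forward orbit of `x`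
the values of `f` come arbitrarily close to `L x` infinitely often, while being equal to it at most
once because `f` is injective and `T` is aperiodic. Hence the sets
`{y | f y ≠ L y ∧ |f y - L y| < 1 / (n + 1)}` meet every forward half-orbit and decrease to the
empty set. The union with the corresponding sets for `T⁻¹` takes care of backward half-orbits.
-/

open MeasureTheory Set Filter Topology
open scoped ENNReal

namespace BDK

variable {X : Type*} [MeasurableSpace X]

/-! ### Vanishing markers -/

lemma symm_mem_ApSet {T : X ≃ᵐ X} (hT : T ∈ ApSet) : T.symm ∈ ApSet := by
  intro x n hn h
  refine hT x n hn ?_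
  have := (T.toEquiv.right_inv.iterate n) x
  change (⇑T)^[n] ((⇑T.symm)^[n] x) = x at this
  rwa [h] at this

/-- A vanishing sequence of Borel sets, each of which meets every forward half-orbit. -/
lemma exists_vanishing_markers_s16 [StandardBorelSpace X] (T : X ≃ᵐ X) (hT : T ∈ ApSet) :
    ∃ A : ℕ → Set X, (∀ n, MeasurableSet (A n)) ∧ (∀ x, ∀ᶠ n in atTop, x ∉ A n) ∧
      ∀ n x, ∃ k, (⇑T)^[k] x ∈ A n := by
  obtain ⟨e, he⟩ := exists_measurableEmbedding_real X
  -- composing with `arctan` makes the orbit sequences bounded, so that their `liminf` is not junk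
  let f : X → ℝ := fun x => Real.arctan (e x)
  have hf : Measurable f := Real.measurable_arctan.comp he.measurable
  have hfi : Function.Injective f := Real.arctan_injective.comp he.injective
  let L : X → ℝ := fun x => liminf (fun k : ℕ => f ((⇑T)^[k] x)) atTop
  have hL : Measurable L :=
    Measurable.liminf fun k => hf.comp (T.measurable.iterate k)
  have hLk : ∀ k x, L ((⇑T)^[k] x) = L x := by
    intro k x
    have := liminf_nat_add (fun i : ℕ => f ((⇑T)^[i] x)) k
    simpa only [L, Function.iterate_add_apply] using this
  have hlow : ∀ x, IsBoundedUnder (· ≥ ·) atTop (fun k : ℕ => f ((⇑T)^[k] x)) := fun x =>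
    isBoundedUnder_of ⟨-(Real.pi / 2), fun k => (Real.neg_pi_div_two_lt_arctan _).le⟩
  have hup : ∀ x, IsBoundedUnder (· ≤ ·) atTop (fun k : ℕ => f ((⇑T)^[k] x)) := fun x =>
    isBoundedUnder_of ⟨Real.pi / 2, fun k => (Real.arctan_lt_pi_div_two _).le⟩
  refine ⟨fun n => {y | f y ≠ L y ∧ |f y - L y| < 1 / ((n : ℝ) + 1)}, fun n => ?_,
    fun x => ?_, fun n x => ?_⟩
  · have h1 : MeasurableSet {y | f y = L y} := measurableSet_eq_fun hf hL
    have h2 : MeasurableSet {y | |f y - L y| < 1 / ((n : ℝ) + 1)} :=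
      measurableSet_lt (by fun_prop) measurable_const
    exact h1.compl.inter h2
  · by_cases h : f x = L x
    · exact Eventually.of_forall fun n hn => hn.1 h
    · have hpos : 0 < |f x - L x| := abs_pos.2 (sub_ne_zero.2 h)
      filter_upwards [tendsto_one_div_add_atTop_nhds_zero_nat.eventually_lt_const hpos] with n hn hx
      exact lt_asymm hn hx.2
  · have hε : (0 : ℝ) < 1 / ((n : ℝ) + 1) := by positivity
    have h1 : ∃ᶠ k in atTop, f ((⇑T)^[k] x) < L x + 1 / ((n : ℝ) + 1) :=
      frequently_lt_of_liminf_lt (hup x).isCoboundedUnder_ge (lt_add_of_pos_right _ hε)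
    have h2 : ∀ᶠ k in atTop, L x - 1 / ((n : ℝ) + 1) < f ((⇑T)^[k] x) :=
      eventually_lt_of_lt_liminf (sub_lt_self _ hε) (hlow x)
    have h3 : ∀ᶠ k in atTop, f ((⇑T)^[k] x) ≠ L x := by
      by_cases h : ∃ k₀, f ((⇑T)^[k₀] x) = L x
      · obtain ⟨k₀, hk₀⟩ := h
        filter_upwards [eventually_gt_atTop k₀] with k hk heq
        refine hT ((⇑T)^[k₀] x) (k - k₀) (by omega) ?_
        rw [← Function.iterate_add_apply, Nat.sub_add_cancel hk.le]
        exact hfi (heq.trans hk₀.symm)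
      · exact Eventually.of_forall fun k hk => h ⟨k, hk⟩
    obtain ⟨k, hk1, hk2, hk3⟩ := (h1.and_eventually (h2.and h3)).exists
    refine ⟨k, ?_⟩
    simp only [mem_ofPred_eq, hLk]
    exact ⟨hk3, abs_sub_lt_iff.2 ⟨by linarith, by linarith⟩⟩

/-- Vanishing Borel sets, each of which meets every forward and every backward half-orbit. -/
lemma exists_vanishing_cuts [StandardBorelSpace X] (T : X ≃ᵐ X) (hT : T ∈ ApSet) :
    ∃ C : ℕ → Set X, (∀ n, MeasurableSet (C n)) ∧ (∀ x, ∀ᶠ n in atTop, x ∉ C n) ∧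
      (∀ n x, ∃ k, (⇑T)^[k] x ∈ C n) ∧ ∀ n x, ∃ k, (⇑T.symm)^[k] x ∈ C n := by
  obtain ⟨A, hA, hA0, hAT⟩ := exists_vanishing_markers_s16 T hT
  obtain ⟨B, hB, hB0, hBT⟩ := exists_vanishing_markers_s16 T.symm (symm_mem_ApSet hT)
  refine ⟨fun n => A n ∪ B n, fun n => (hA n).union (hB n), fun x => ?_, fun n x => ?_,
    fun n x => ?_⟩
  · filter_upwards [hA0 x, hB0 x] with n h1 h2 h
    exact h.elim h1 h2
  · exact (hAT n x).imp fun k hk => Or.inl hk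
  · exact (hBT n x).imp fun k hk => Or.inr hk

/-! ### Closing up finite blocks of orbits -/

lemma measurable_iterate_var {S : X → X} (hS : Measurable S) {b : X → ℕ} (hb : Measurable b) :
    Measurable fun x => S^[b x] x := by
  have h : Measurable fun p : X × ℕ => S^[p.2] p.1 :=
    measurable_from_prod_countable_left fun k => hS.iterate k
  exact h.comp (measurable_id.prodMk hb)

/-- Closing up the blocks cut out by `C`: a pointwise periodic element of the full group of `T`
that agrees with `T`, inverses included, off `C ∪ T⁻¹ C`. -/
lemma exists_periodic_of_cut (T : X ≃ᵐ X) {C : Set X} (hC : MeasurableSet C)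
    (hfwd : ∀ x, ∃ k, (⇑T)^[k] x ∈ C) (hbwd : ∀ x, ∃ k, (⇑T.symm)^[k] x ∈ C) :
    ∃ P : X ≃ᵐ X, P ∈ PerSet ∧ P ∈ fullGroup T ∧ Edis P T ⊆ C ∪ T ⁻¹' C := by
  classical
  have hfwd' : ∀ x, ∃ k, (⇑T)^[k + 1] x ∈ C := fun x => hfwd (T x)
  -- `b x` and `a x` are the distances from `x` to the first and to the last point of its block
  let b : X → ℕ := fun x => Nat.find (hbwd x)
  let a : X → ℕ := fun x => Nat.find (hfwd' x)
  have hb : Measurable b := measurable_find hbwd fun k => (T.symm.measurable.iterate k) hC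
  have ha : Measurable a := measurable_find hfwd' fun k => (T.measurable.iterate (k + 1)) hC
  have bmem : ∀ x, (⇑T.symm)^[b x] x ∈ C := fun x => Nat.find_spec (hbwd x)
  have amem : ∀ x, (⇑T)^[a x + 1] x ∈ C := fun x => Nat.find_spec (hfwd' x)
  have bmin : ∀ x k, k < b x → (⇑T.symm)^[k] x ∉ C := fun x k h => Nat.find_min (hbwd x) h
  have amin : ∀ x k, k < a x → (⇑T)^[k + 1] x ∉ C := fun x k h => Nat.find_min (hfwd' x) h
  have beq : ∀ x k, (⇑T.symm)^[k] x ∈ C → (∀ j < k, (⇑T.symm)^[j] x ∉ C) → b x = k :=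
    fun x k h1 h2 => (Nat.find_eq_iff _).2 ⟨h1, h2⟩
  have aeq : ∀ x k, (⇑T)^[k + 1] x ∈ C → (∀ j < k, (⇑T)^[j + 1] x ∉ C) → a x = k :=
    fun x k h1 h2 => (Nat.find_eq_iff _).2 ⟨h1, h2⟩
  have TS : ∀ k x, (⇑T)^[k] ((⇑T.symm)^[k] x) = x := fun k x => T.toEquiv.right_inv.iterate k x
  have ST : ∀ k x, (⇑T.symm)^[k] ((⇑T)^[k] x) = x := fun k x => T.toEquiv.left_inv.iterate k x
  have TS' : ∀ k n x, k ≤ n → (⇑T)^[k] ((⇑T.symm)^[n] x) = (⇑T.symm)^[n - k] x := by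
    intro k n x h
    obtain ⟨m, rfl⟩ := Nat.exists_eq_add_of_le h
    rw [Function.iterate_add_apply, TS, Nat.add_sub_cancel_left]
  have ST' : ∀ k n x, k ≤ n → (⇑T.symm)^[k] ((⇑T)^[n] x) = (⇑T)^[n - k] x := by
    intro k n x h
    obtain ⟨m, rfl⟩ := Nat.exists_eq_add_of_le h
    rw [Function.iterate_add_apply, ST, Nat.add_sub_cancel_left]
  -- seen from the first point of the block of `x`, no cut occurs in the next `b x` steps
  have nocut : ∀ x k, k < b x → (⇑T)^[k + 1] ((⇑T.symm)^[b x] x) ∉ C := by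
    intro x k hk
    rw [TS' _ _ _ hk]
    exact bmin _ _ (by omega)
  let p : X → X := fun x => if T x ∈ C then (⇑T.symm)^[b x] x else T x
  let q : X → X := fun x => if x ∈ C then (⇑T)^[a x] x else T.symm x
  have hp : Measurable p :=
    Measurable.ite (T.measurable hC) (measurable_iterate_var T.symm.measurable hb) T.measurable
  have hq : Measurable q :=
    Measurable.ite hC (measurable_iterate_var T.measurable ha) T.symm.measurable
  have hqp : Function.LeftInverse q p := by
    intro x
    by_cases h : T x ∈ C
    · have hab : a ((⇑T.symm)^[b x] x) = b x := by
        refine aeq _ _ ?_ (nocut x)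
        rw [Function.iterate_succ_apply', TS]
        exact h
      simp only [p, q, if_pos h, if_pos (bmem x), hab, TS]
    · simp [p, q, h]
  have hpq : Function.RightInverse q p := by
    intro x
    by_cases h : x ∈ C
    · have h1 : T ((⇑T)^[a x] x) ∈ C := by
        rw [← Function.iterate_succ_apply' (⇑T)]
        exact amem x
      have hba : b ((⇑T)^[a x] x) = a x := by
        refine beq _ _ (by rwa [ST]) fun j hj => ?_
        rw [ST' _ _ _ hj.le, show a x - j = (a x - j - 1) + 1 by omega]
        exact amin _ _ (by omega)
      simp only [p, q, if_pos h, if_pos h1, hba, ST]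
    · simp [p, q, h]
  let P : X ≃ᵐ X := ⟨⟨p, q, hqp, hpq⟩, hp, hq⟩
  have hPp : (⇑P : X → X) = p := rfl
  refine ⟨P, fun x => ?_, fun x => ?_, ?_⟩
  · rw [hPp]
    set y := (⇑T.symm)^[b x] x with hy
    have hyC : y ∈ C := bmem x
    have step : ∀ j ≤ a y, p^[j] y = (⇑T)^[j] y := by
      intro j
      induction j with
      | zero => intro _; rfl
      | succ j ih =>
        intro hj
        have hn := amin y j hj
        rw [Function.iterate_succ_apply'] at hn
        rw [Function.iterate_succ_apply', Function.iterate_succ_apply', ih (by omega)]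
        exact if_neg hn
    have hba : b x ≤ a y := by
      by_contra! h
      exact nocut x _ h (amem y)
    have hx : p^[b x] y = x := by rw [step _ hba, hy, TS]
    have hqy : q y = (⇑T)^[a y] y := if_pos hyC
    have hper : p^[a y + 1] y = y := by
      rw [Function.iterate_succ_apply', step _ le_rfl, ← hqy]
      exact hpq y
    refine ⟨a y + 1, Nat.succ_pos _, ?_⟩
    calc p^[a y + 1] x = p^[a y + 1] (p^[b x] y) := by rw [hx]
      _ = p^[b x] (p^[a y + 1] y) := by
        rw [← Function.iterate_add_apply, ← Function.iterate_add_apply, Nat.add_comm]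
      _ = x := by rw [hper, hx]
  · rw [hPp]
    by_cases h : T x ∈ C
    · refine ⟨-(b x : ℤ), ?_⟩
      simp only [p, if_pos h]
      rw [zpow_neg, zpow_natCast, ← inv_pow, ← Equiv.Perm.iterate_eq_pow]
      rfl
    · refine ⟨1, ?_⟩
      simp only [p, if_neg h, zpow_one]
      rfl
  · rintro x (h | h)
    · refine Or.inr ?_
      by_contra hx
      exact h (if_neg hx)
    · refine Or.inl ?_
      by_contra hx
      exact h (if_neg hx)

/-! ### Convergence in the uniform topology -/

lemma Edis_triangle (R S T : X ≃ᵐ X) : Edis R T ⊆ Edis R S ∪ Edis S T := by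
  intro x hx
  simp only [Edis, mem_union, mem_ofPred_eq] at hx ⊢
  grind

/-- Convergence in measure of the disagreement sets gives convergence in `τ`. The topology is
generated by balls around arbitrary centres `S`, whence the triangle inequality. -/
lemma tendsto_tau {P : ℕ → X ≃ᵐ X} {T : X ≃ᵐ X}
    (h : ∀ μ : Measure X, IsProbabilityMeasure μ →
      Tendsto (fun n => μ (Edis (P n) T)) atTop (𝓝 0)) :
    Tendsto P atTop (@nhds _ tau T) := by
  rw [tau, TopologicalSpace.tendsto_nhds_generateFrom_iff]
  rintro _ ⟨S, M, ε, ⟨hfin, hprob⟩, -, rfl⟩ hTS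
  have key : ∀ μ ∈ M, ∀ᶠ n in atTop, μ (Edis (P n) S) < ε := by
    intro μ hμ
    have h1 : Tendsto (fun n => μ (Edis (P n) T) + μ (Edis T S)) atTop
        (𝓝 (0 + μ (Edis T S))) := (h μ (hprob μ hμ)).add tendsto_const_nhds
    rw [zero_add] at h1
    filter_upwards [h1.eventually_lt_const (hTS μ hμ)] with n hn
    exact ((measure_mono (Edis_triangle _ T _)).trans (measure_union_le _ _)).trans_lt hn
  exact (hfin.eventually_all).2 key

/-! ### Periodic approximation -/

/-- Every aperiodic Borel automorphism `T` is the `τ`-limit of a sequence of pointwise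
periodic Borel automorphisms, all belonging to the full group `[T]`. -/
theorem periodic_approximation {X : Type*} [MeasurableSpace X] [StandardBorelSpace X]
    [Uncountable X] (T : X ≃ᵐ X) (hT : T ∈ ApSet) :
    ∃ P : ℕ → X ≃ᵐ X,
      (∀ n, P n ∈ PerSet ∧ P n ∈ fullGroup T) ∧
      Tendsto P atTop (@nhds _ tau T) := by
  obtain ⟨C, hC, hC0, hfwd, hbwd⟩ := exists_vanishing_cuts T hT
  choose P hper hfull hE using fun n => exists_periodic_of_cut T (hC n) (hfwd n) (hbwd n)
  refine ⟨P, fun n => ⟨hper n, hfull n⟩, tendsto_tau fun μ hμ => ?_⟩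
  have hlim : Tendsto (fun n => μ (C n ∪ T ⁻¹' C n)) atTop (𝓝 (μ ∅)) := by
    refine tendsto_measure_of_tendsto_indicator_of_isFiniteMeasure atTop μ
      (fun n => (hC n).union (T.measurable (hC n))) fun x => ?_
    filter_upwards [hC0 x, hC0 (T x)] with n h1 h2
    simp [h1, h2]
  rw [measure_empty] at hlim
  exact tendsto_of_tendsto_of_tendsto_of_le_of_le tendsto_const_nhds hlim
    (fun _ => zero_le) fun n => measure_mono (hE n)

end BDK
end

section
/- (1) The τ₀-closure of the set Ap of aperiodic Borel automorphisms equals the set Ap mod(Ctbl) of automorphisms whose set of periodic points is at most countable. (2) Ap is a closed, nowhere dense subset of Aut(X,𝓑) with respect to the uniform topology τ. -/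
/-!
Both topologies have the sets `tauBall T M ε` as a neighborhood base, because
`Edis R T ⊆ Edis R S ∪ Edis S T`; so membership in a closure or an interior can be tested on them.
Everything rests on two remarks.

* If `S` agrees with `T` at `x, T x, …, T^(n-1) x`, then `S^n x = T^n x`. Hence periodicity of `T`
  at one point survives small perturbations that are controlled at the finitely many points of its
  orbit. With Dirac measures on the orbit this shows that `ApSet` is `τ`-closed. If the set of
  periodic points of `T` is uncountable, so is `{x | T^n x = x}` for some `n > 0`; by the Borel
  isomorphism theorem it carries a non-atomic probability measure `ν`, and the measures `T^i_* ν`,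
  `i < n`, give a `τ₀`-neighborhood of `T` without aperiodic elements.
* A bijection that differs from `T` only on a countable set is again a Borel automorphism, and its
  difference set with `T` is countable. If `T` has countably many periodic points, replace `T` on
  the countable invariant set made of these points and one infinite orbit by a copy of the shift
  of `ℤ`: the result is aperiodic and indistinguishable from `T` by non-atomic measures. For any
  `T`, composing with the transposition of `x` and `T x`, where `x, T x, T⁻¹ x` are not atoms of
  the given measures, produces a fixed point at no cost, so `ApSet` has empty `τ`-interior.
-/

open MeasureTheory Set Filter Topology
open scoped ENNReal

namespace BDK

variable {X : Type*} [MeasurableSpace X]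

lemma mem_tauBall_self (T : X ≃ᵐ X) (M : Set (Measure X)) {ε : ℝ≥0∞} (hε : 0 < ε) :
    T ∈ tauBall T M ε := by
  intro μ _
  simpa [Edis] using hε

/-- Every point of a ball is the center of a smaller ball. -/
lemma exists_tauBall_subset {S T : X ≃ᵐ X} {M : Set (Measure X)} (hM : M.Finite) {ε : ℝ≥0∞}
    (hε : 0 < ε) (hS : S ∈ tauBall T M ε) : ∃ δ, 0 < δ ∧ tauBall S M δ ⊆ tauBall T M ε := by
  rcases M.eq_empty_or_nonempty with rfl | hne
  · exact ⟨ε, hε, fun R _ μ hμ => absurd hμ (by simp)⟩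
  · obtain ⟨μ₀, hμ₀, hmax⟩ := exists_max_image M (fun μ => μ (Edis S T)) hM hne
    refine ⟨ε - μ₀ (Edis S T), tsub_pos_of_lt (hS μ₀ hμ₀), fun R hR μ hμ => ?_⟩
    calc μ (Edis R T) ≤ μ (Edis R S) + μ (Edis S T) :=
          (measure_mono (Edis_triangle R S T)).trans (measure_union_le _ _)
      _ < (ε - μ₀ (Edis S T)) + μ (Edis S T) :=
          ENNReal.add_lt_add_right (hS μ hμ).ne_top (hR μ hμ)
      _ ≤ (ε - μ₀ (Edis S T)) + μ₀ (Edis S T) := add_le_add le_rfl (hmax μ hμ)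
      _ = ε := tsub_add_cancel_of_le (hS μ₀ hμ₀).le

/-- For a class `Q` of finite families closed under union, the balls form a neighborhood base of
the topology they generate. This applies to both `tau` and `tau0`. -/
lemma exists_tauBall_subset_of_isOpen {Q : Set (Measure X) → Prop} (hfin : ∀ M, Q M → M.Finite)
    (h0 : Q ∅) (hU : ∀ M N, Q M → Q N → Q (M ∪ N)) {U : Set (X ≃ᵐ X)}
    (hUo : TopologicalSpace.GenerateOpen {O | ∃ (T : X ≃ᵐ X) (M : Set (Measure X)) (ε : ℝ≥0∞),
      Q M ∧ 0 < ε ∧ O = tauBall T M ε} U) {T : X ≃ᵐ X} (hT : T ∈ U) :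
    ∃ M ε, Q M ∧ 0 < ε ∧ tauBall T M ε ⊆ U := by
  induction hUo with
  | basic s hs =>
    obtain ⟨S, M, ε, hQ, hε, rfl⟩ := hs
    obtain ⟨δ, hδ, h⟩ := exists_tauBall_subset (hfin M hQ) hε hT
    exact ⟨M, δ, hQ, hδ, h⟩
  | univ => exact ⟨∅, 1, h0, one_pos, subset_univ _⟩
  | inter s t _ _ ihs iht =>
    obtain ⟨M, ε, hM, hε, hs⟩ := ihs hT.1
    obtain ⟨N, δ, hN, hδ, ht⟩ := iht hT.2
    refine ⟨M ∪ N, min ε δ, hU M N hM hN, lt_min hε hδ, fun S hS => ⟨hs fun μ hμ => ?_,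
      ht fun μ hμ => ?_⟩⟩
    · exact (hS μ (.inl hμ)).trans_le (min_le_left _ _)
    · exact (hS μ (.inr hμ)).trans_le (min_le_right _ _)
  | sUnion K _ ih =>
    obtain ⟨s, hs, hTs⟩ := hT
    obtain ⟨M, ε, hM, hε, h⟩ := ih s hs hTs
    exact ⟨M, ε, hM, hε, h.trans (subset_sUnion_of_mem hs)⟩

lemma isOpen_tau_exists {U : Set (X ≃ᵐ X)} (hU : IsOpen[tau] U) {T : X ≃ᵐ X} (hT : T ∈ U) :
    ∃ M ε, IsProbFamily M ∧ 0 < ε ∧ tauBall T M ε ⊆ U := by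
  refine exists_tauBall_subset_of_isOpen (fun M h => h.1) ⟨finite_empty, by simp⟩ ?_ hU hT
  exact fun M N hM hN => ⟨hM.1.union hN.1, fun μ hμ => hμ.elim (hM.2 μ) (hN.2 μ)⟩

lemma isOpen_tau0_exists {U : Set (X ≃ᵐ X)} (hU : IsOpen[tau0] U) {T : X ≃ᵐ X} (hT : T ∈ U) :
    ∃ M ε, IsContProbFamily M ∧ 0 < ε ∧ tauBall T M ε ⊆ U := by
  refine exists_tauBall_subset_of_isOpen (fun M h => h.1) ⟨finite_empty, by simp⟩ ?_ hU hT
  exact fun M N hM hN => ⟨hM.1.union hN.1, fun μ hμ => hμ.elim (hM.2 μ) (hN.2 μ)⟩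

/-! ### Persistence of periodic points -/

lemma iterate_eq_of_agree {S T : X ≃ᵐ X} {x : X} {n : ℕ}
    (h : ∀ i < n, (⇑T)^[i] x ∉ Edis S T) : (⇑S)^[n] x = (⇑T)^[n] x := by
  induction n with
  | zero => rfl
  | succ n ih =>
    rw [Function.iterate_succ_apply', Function.iterate_succ_apply',
      ih fun i hi => h i (hi.trans n.lt_succ_self)]
    have := h n n.lt_succ_self
    simp only [Edis, mem_union, mem_ofPred_eq, not_or, not_not] at this
    exact this.1

lemma isClosed_ApSet [MeasurableSingletonClass X] : IsClosed[tau] (ApSet (X := X)) := by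
  let : TopologicalSpace (X ≃ᵐ X) := tau
  refine isClosed_of_closure_subset fun T hT x n hn hx => ?_
  let M : Set (Measure X) := (fun i => Measure.dirac ((⇑T)^[i] x)) '' Iio n
  have hM : IsProbFamily M := by
    refine ⟨(finite_Iio n).image _, ?_⟩
    rintro _ ⟨i, -, rfl⟩
    infer_instance
  obtain ⟨S, hS, hSA⟩ := mem_closure_iff.1 hT (tauBall T M 1)
    (TopologicalSpace.isOpen_generateFrom_of_mem ⟨T, M, 1, hM, one_pos, rfl⟩)
    (mem_tauBall_self T M one_pos)
  refine hSA x n hn ((iterate_eq_of_agree fun i hi hmem => ?_).trans hx)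
  have := hS _ ⟨i, hi, rfl⟩
  simp [hmem] at this

/-- An uncountable Borel subset of a standard Borel space carries a non-atomic probability
measure, namely a copy of Lebesgue measure on the unit interval. -/
lemma exists_nonatomic [StandardBorelSpace X] {P : Set X} (hP : MeasurableSet P)
    (hc : ¬ P.Countable) :
    ∃ ν : Measure X, IsProbabilityMeasure ν ∧ ν P = 1 ∧ ∀ x, ν {x} = 0 := by
  have := hP.standardBorel
  have hI : ¬ Countable unitInterval := by
    intro h
    have := (countable_coe_iff.1 h).measure_zero volume
    simp at this
  let e := PolishSpace.measurableEquivOfNotCountable (α := unitInterval) (β := P) hI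
    (fun h => hc (countable_coe_iff.1 h))
  have hm : Measurable (fun t => (e t : X)) := measurable_subtype_coe.comp e.measurable
  refine ⟨Measure.map (fun t => (e t : X)) volume, Measure.isProbabilityMeasure_map hm.aemeasurable,
    ?_, fun x => ?_⟩
  · have huniv : (fun t => (e t : X)) ⁻¹' P = univ := eq_univ_of_forall fun t => (e t).2
    rw [Measure.map_apply hm hP, huniv, measure_univ]
  · rw [Measure.map_apply hm (measurableSet_singleton x)]
    refine Set.Subsingleton.measure_zero (fun a ha b hb => ?_) _
    exact e.injective (Subtype.ext ((mem_singleton_iff.1 ha).trans (mem_singleton_iff.1 hb).symm))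

lemma closure_ApSet_subset [StandardBorelSpace X] :
    @closure (X ≃ᵐ X) tau0 ApSet ⊆ ApModCtbl := by
  let : TopologicalSpace (X ≃ᵐ X) := tau0
  intro T hT
  by_contra hnot
  obtain ⟨n, hn, hPc⟩ : ∃ n, 0 < n ∧ ¬ {x | (⇑T)^[n] x = x}.Countable := by
    by_contra! h
    refine hnot ?_
    have : {x | ∃ n, 0 < n ∧ (⇑T)^[n] x = x} = ⋃ n ∈ {n : ℕ | 0 < n}, {x | (⇑T)^[n] x = x} := by
      ext; simp
    change Set.Countable {x | ∃ n, 0 < n ∧ (⇑T)^[n] x = x}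
    rw [this]
    exact (to_countable _).biUnion fun n hn => h n hn
  have hmT : ∀ i, Measurable (⇑T)^[i] := fun i => T.measurable.iterate i
  obtain ⟨ν, hν, hνP, hν0⟩ :=
    exists_nonatomic (measurableSet_eq_fun (hmT n) measurable_id) hPc
  let M : Set (Measure X) := (fun i => ν.map (⇑T)^[i]) '' Iio n
  have hM : IsContProbFamily M := by
    refine ⟨(finite_Iio n).image _, ?_⟩
    rintro _ ⟨i, -, rfl⟩
    refine ⟨Measure.isProbabilityMeasure_map (hmT i).aemeasurable, fun x => ?_⟩
    rw [Measure.map_apply (hmT i) (measurableSet_singleton x)]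
    have hsub : ((⇑T)^[i] ⁻¹' {x}).Subsingleton := fun a ha b hb =>
      T.injective.iterate i (ha.trans (Eq.symm hb))
    rcases hsub.eq_empty_or_singleton with h | ⟨y, h⟩ <;> simp [h, hν0]
  -- The radius is chosen so that `n` sets of measure at most `(n + 1)⁻¹` cannot have measure `1`.
  have hε : (0 : ℝ≥0∞) < ((n : ℝ≥0∞) + 1)⁻¹ := by simp
  obtain ⟨S, hS, hSA⟩ := mem_closure_iff.1 hT (tauBall T M ((n : ℝ≥0∞) + 1)⁻¹)
    (TopologicalSpace.isOpen_generateFrom_of_mem ⟨T, M, _, hM, hε, rfl⟩)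
    (mem_tauBall_self T M hε)
  have hsub : {x | (⇑T)^[n] x = x} ⊆ ⋃ i ∈ Finset.range n, (⇑T)^[i] ⁻¹' Edis S T := by
    intro x hx
    by_contra h
    simp only [mem_iUnion, Finset.mem_range, not_exists, mem_preimage] at h
    exact hSA x n hn ((iterate_eq_of_agree h).trans hx)
  have : (1 : ℝ≥0∞) < 1 := calc
    1 = ν {x | (⇑T)^[n] x = x} := hνP.symm
    _ ≤ ∑ i ∈ Finset.range n, ν ((⇑T)^[i] ⁻¹' Edis S T) :=
      (measure_mono hsub).trans (measure_biUnion_finset_le _ _)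
    _ ≤ ∑ i ∈ Finset.range n, ((n : ℝ≥0∞) + 1)⁻¹ := by
      refine Finset.sum_le_sum fun i hi => ?_
      exact (Measure.le_map_apply (hmT i).aemeasurable _).trans
        (hS _ ⟨i, Finset.mem_range.1 hi, rfl⟩).le
    _ = (n : ℝ≥0∞) / (n + 1) := by simp [div_eq_mul_inv]
    _ < 1 := by
      refine ENNReal.div_lt_of_lt_mul ?_
      rw [one_mul]
      exact_mod_cast n.lt_succ_self
  exact lt_irrefl _ this

/-! ### Modification on a countable set -/

lemma symm_ne_subset (S : Equiv.Perm X) (T : X ≃ᵐ X) :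
    {x | S.symm x ≠ T.symm x} ⊆ S '' {x | S x ≠ T x} := by
  intro y hy
  refine ⟨S.symm y, fun h => hy ?_, by simp⟩
  rw [S.apply_symm_apply] at h
  rw [h, T.symm_apply_apply, ← h]

/-- A bijection that differs from a Borel automorphism on a countable set, as a Borel
automorphism. -/
def modify [MeasurableSingletonClass X] (S : Equiv.Perm X) (T : X ≃ᵐ X)
    (h : {x | S x ≠ T x}.Countable) : X ≃ᵐ X where
  toEquiv := S
  measurable_toFun := T.measurable.measurable_of_countable_ne (by simpa only [ne_comm] using h)
  measurable_invFun := T.symm.measurable.measurable_of_countable_ne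
    (((h.image S).mono (symm_ne_subset S T)).mono fun _ hx => Ne.symm hx)

lemma Edis_modify_subset [MeasurableSingletonClass X] (S : Equiv.Perm X) (T : X ≃ᵐ X)
    (h : {x | S x ≠ T x}.Countable) :
    Edis (modify S T h) T ⊆ {x | S x ≠ T x} ∪ S '' {x | S x ≠ T x} :=
  union_subset_union_right _ (symm_ne_subset S T)

lemma periodic_apply_iff (T : X ≃ᵐ X) (y : X) :
    (∃ n, 0 < n ∧ (⇑T)^[n] (T y) = T y) ↔ ∃ n, 0 < n ∧ (⇑T)^[n] y = y := by
  simp only [← Function.iterate_succ_apply, Function.iterate_succ_apply', T.injective.eq_iff]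

/-- If `T` has countably many periodic points, redefining it as a shift on the countable set of
all periodic points and one infinite orbit gives an aperiodic automorphism. -/
lemma exists_aperiodic_countable_diff [MeasurableSingletonClass X] [Uncountable X] {T : X ≃ᵐ X}
    (hT : T ∈ ApModCtbl) : ∃ S ∈ ApSet (X := X), (Edis S T).Countable := by
  classical
  let P : Set X := {x | ∃ n, 0 < n ∧ (⇑T)^[n] x = x}
  have hP : P.Countable := hT
  obtain ⟨x, hx⟩ : ∃ x, x ∉ P := by
    by_contra! h
    exact not_countable_univ (hP.mono fun x _ => h x)
  let f : Equiv.Perm X := T.toEquiv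
  let C : Set X := P ∪ range fun k : ℤ => (f ^ k) x
  have hC : C.Countable := hP.union (countable_range _)
  have hinv : ∀ y, f y ∈ C ↔ y ∈ C := by
    intro y
    refine or_congr (periodic_apply_iff T y) ⟨?_, ?_⟩
    · rintro ⟨k, hk⟩
      refine ⟨-1 + k, ?_⟩
      change (f ^ k) x = f y at hk
      change (f ^ (-1 + k)) x = y
      rw [zpow_add, Equiv.Perm.mul_apply, hk, zpow_neg_one, ← Equiv.Perm.mul_apply,
        inv_mul_cancel, Equiv.Perm.one_apply]
    · rintro ⟨k, hk⟩
      refine ⟨1 + k, ?_⟩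
      change (f ^ k) x = y at hk
      change (f ^ (1 + k)) x = f y
      rw [zpow_add, Equiv.Perm.mul_apply, hk, zpow_one]
  have hinj : Function.Injective fun k : ℕ => (⇑T)^[k] x := by
    -- An equality between two iterates of `x` cancels to `T^(b-a) x = x`.
    have key : ∀ a b : ℕ, a < b → (⇑T)^[a] x ≠ (⇑T)^[b] x := by
      intro a b hab h
      refine hx ⟨b - a, by omega, T.injective.iterate a ?_⟩
      rw [← Function.iterate_add_apply, Nat.add_sub_cancel' hab.le, h]
    intro a b h
    rcases lt_trichotomy a b with hab | hab | hab
    · exact absurd h (key a b hab)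
    · exact hab
    · exact absurd h.symm (key b a hab)
  have hCinf : C.Infinite := by
    refine (infinite_range_of_injective hinj).mono ?_
    rintro _ ⟨k, rfl⟩
    refine .inr ⟨k, ?_⟩
    change (f ^ (k : ℤ)) x = (⇑T)^[k] x
    rw [zpow_natCast, Equiv.Perm.coe_pow]
    rfl
  have : Countable {y // y ∈ C} := hC.to_subtype
  have : Infinite {y // y ∈ C} := hCinf.to_subtype
  obtain ⟨e⟩ : Nonempty ({y // y ∈ C} ≃ ℤ) := nonempty_equiv_of_countable
  let σ : Equiv.Perm {y // y ∈ C} := (e.trans (Equiv.addRight 1)).trans e.symm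
  let S : Equiv.Perm X := σ.subtypeCongr (f.subtypePerm (p := fun y => ¬ y ∈ C)
    fun y => not_congr (hinv y))
  have hSC : ∀ y : {y // y ∈ C}, S y = σ y := fun y => by
    simp [S]
  have hSn : ∀ y ∉ C, S y = T y := fun y hy => by
    simp [S, hy, f]
  have hne : {y | S y ≠ T y} ⊆ C := fun y hy => by
    by_contra h
    exact hy (hSn y h)
  have hcount := hC.mono hne
  refine ⟨modify S T hcount, ?_, (hcount.union (hcount.image S)).mono (Edis_modify_subset S T _)⟩
  intro y n hn hy
  change (⇑S)^[n] y = y at hy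
  by_cases hyC : y ∈ C
  · have hit : ∀ m, (⇑S)^[m] y = e.symm (e ⟨y, hyC⟩ + m) := by
      intro m
      induction m with
      | zero => simp
      | succ m ih =>
        rw [Function.iterate_succ_apply', ih, hSC]
        simp [σ, add_assoc]
    have h := (hit n).symm.trans hy
    have h2 : e.symm (e ⟨y, hyC⟩ + n) = ⟨y, hyC⟩ := Subtype.ext h
    rw [Equiv.symm_apply_eq] at h2
    omega
  · have hit : ∀ m, (⇑S)^[m] y = (⇑T)^[m] y ∧ (⇑T)^[m] y ∉ C := by
      intro m
      induction m with
      | zero => exact ⟨rfl, hyC⟩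
      | succ m ih =>
        rw [Function.iterate_succ_apply', Function.iterate_succ_apply', ih.1, hSn _ ih.2]
        exact ⟨rfl, fun h => ih.2 ((hinv _).1 h)⟩
    exact hyC (.inl ⟨n, hn, (hit n).1.symm.trans hy⟩)

lemma ApModCtbl_subset_closure [MeasurableSingletonClass X] [Uncountable X] :
    ApModCtbl ⊆ @closure (X ≃ᵐ X) tau0 ApSet := by
  let : TopologicalSpace (X ≃ᵐ X) := tau0
  intro T hT
  rw [mem_closure_iff]
  intro U hU hTU
  obtain ⟨M, ε, hM, hε, hsub⟩ := isOpen_tau0_exists hU hTU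
  obtain ⟨S, hS, hc⟩ := exists_aperiodic_countable_diff hT
  refine ⟨S, hsub fun μ hμ => ?_, hS⟩
  have h0 : μ (Edis S T) = 0 := by
    rw [← biUnion_of_singleton (Edis S T), measure_biUnion_null_iff hc]
    exact fun x _ => (hM.2 μ hμ).2 x
  rwa [h0]

lemma exists_fixed_mem_tauBall [MeasurableSingletonClass X] [Uncountable X] (T : X ≃ᵐ X)
    {M : Set (Measure X)} (hM : IsProbFamily M) {ε : ℝ≥0∞} (hε : 0 < ε) :
    ∃ S ∈ tauBall T M ε, ∃ x, S x = x := by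
  classical
  let A : Set X := ⋃ μ ∈ M, {x | 0 < μ {x}}
  have hA : A.Countable := by
    refine hM.1.countable.biUnion fun μ hμ => ?_
    have := hM.2 μ hμ
    exact Measure.countable_meas_pos_of_disjoint_iUnion (fun x => measurableSet_singleton x)
      fun x y hxy => disjoint_singleton.2 hxy
  have hA0 : ∀ μ ∈ M, ∀ x ∉ A, μ {x} = 0 := by
    intro μ hμ x hx
    by_contra h
    exact hx (mem_biUnion hμ (pos_iff_ne_zero.2 h))
  obtain ⟨x, hx⟩ : ∃ x, x ∉ A ∪ T ⁻¹' A ∪ T.symm ⁻¹' A := by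
    by_contra! h
    refine not_countable_univ (α := X) (Countable.mono (fun x _ => h x) ?_)
    exact (hA.union (hA.preimage T.injective)).union (hA.preimage T.symm.injective)
  simp only [mem_union, mem_preimage, not_or] at hx
  let S : Equiv.Perm X := T.toEquiv.trans (Equiv.swap x (T x))
  have hSx : S x = x := by simp [S]
  have hSx' : S (T.symm x) = T x := by simp [S]
  have hne : {y | S y ≠ T y} ⊆ {x, T.symm x} := by
    intro y hy
    by_contra h
    simp only [mem_insert_iff, mem_singleton_iff, not_or] at h
    refine hy (Equiv.swap_apply_of_ne_of_ne (fun h' => h.2 ?_) fun h' => h.1 (T.injective h'))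
    exact (T.toEquiv.eq_symm_apply).2 h'
  have hcount : {y | S y ≠ T y}.Countable := (to_countable _).mono hne
  refine ⟨modify S T hcount, fun μ hμ => ?_, x, hSx⟩
  have hsub : Edis (modify S T hcount) T ⊆ {x} ∪ {T x} ∪ {T.symm x} := by
    refine (Edis_modify_subset S T hcount).trans (union_subset ?_ ?_)
    · exact hne.trans (by rintro y (rfl | rfl) <;> simp)
    · rintro _ ⟨y, hy, rfl⟩
      rcases hne hy with rfl | rfl
      · simp [hSx]
      · simp [hSx']
  have h0 : μ (Edis (modify S T hcount) T) = 0 := by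
    refine measure_mono_null hsub ?_
    simp only [measure_union_null_iff]
    exact ⟨⟨hA0 μ hμ _ hx.1.1, hA0 μ hμ _ hx.1.2⟩, hA0 μ hμ _ hx.2⟩
  rwa [h0]

/-- (1) The `τ₀`-closure of `Ap` is the set of automorphisms whose set of periodic points
is at most countable.  (2) `Ap` is a closed nowhere dense subset of `(Aut(X,𝓑), τ)`. -/
theorem closure_of_aperiodic {X : Type*} [MeasurableSpace X] [StandardBorelSpace X]
    [Uncountable X] :
    @closure (X ≃ᵐ X) tau0 ApSet = ApModCtbl ∧
    @IsClosed (X ≃ᵐ X) tau ApSet ∧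
    @interior (X ≃ᵐ X) tau (@closure (X ≃ᵐ X) tau ApSet) = ∅ := by
  refine ⟨closure_ApSet_subset.antisymm ApModCtbl_subset_closure, isClosed_ApSet, ?_⟩
  let : TopologicalSpace (X ≃ᵐ X) := tau
  rw [(isClosed_ApSet (X := X)).closure_eq, eq_empty_iff_forall_notMem]
  intro T hT
  obtain ⟨M, ε, hM, hε, hsub⟩ := isOpen_tau_exists isOpen_interior hT
  obtain ⟨S, hS, x, hx⟩ := exists_fixed_mem_tauBall T hM hε
  exact interior_subset (hsub hS) x 1 one_pos hx

end BDK
end
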